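/- Let n be a natural number, let M be a connected Hausdorff topological space locally homeomorphic to the euclidean space ℝⁿ (a topological n-manifold), and let G be a countable group acting effectively (faithfully) by homeomorphisms on M such that the orbit space M/G is Hausdorff. Then the action is perfect: for every pair of compact subsets A, B ⊆ M the set {g ∈ G : gA ∩ B ≠ ∅} is finite; in particular every stabilizer G_x is finite. -/

import Mathlib

open Pointwise

/-!
The key is Newman's theorem: a periodic homeomorphism of a connected manifold which fixes a nonempty
open set pointwise is the identity. If it fails for a homeomorphism `h` of `ℝⁿ` of prime period `p`,
invert in a sphere that touches the complement of the interior of the fixed-point set at one point: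
the points moved by `h` then lie in a paraboloid `c ‖x‖² ≤ ℓ x`. There the average
`f = p⁻¹ ∑ hⁱ` is homotopic to the identity away from the zero set, so it has degree `1`. But `f` is
`h`-invariant, and after an invariant perturbation its zeros come in free `h`-orbits, so the degree
is a multiple of `p`. The degree is the signed Sperner count of sign labels on a fine Kuhn
triangulation.

For the group action, Baire's theorem shows that the closed orbits are discrete, so that each `x`
has a connected neighbourhood `V` whose points `y` satisfy `g • y ∈ V` only for `g` in the
stabilizer of `x`. Such a `g` is then periodic near `x`, and Newman's theorem, applied to `g` on the
part of `V` with bounded period, shows that a `g` fixing an open set pointwise is trivial. By Baire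
again, points with trivial stabilizer are dense, and an orbit meeting `V` in finitely many points
bounds the stabilizer of `x`.
-/

namespace Newman

section KuhnTriangulation

open Equiv

variable {n m : ℕ}

/-- The `k`-th vertex of the simplex of the Kuhn triangulation of `ℤⁿ` with base point `z` and
direction order `σ`: the monotone lattice path `z, z + e_{σ 0}, z + e_{σ 0} + e_{σ 1}, …`. -/
def kuhnVertex (z : Fin n → ℤ) (σ : Perm (Fin n)) (k : Fin (n + 1)) : Fin n → ℤ :=
  fun i => z i + if (σ.symm i : ℕ) < k then 1 else 0

/-- The sum of a function of ordered `n`-simplices over the Kuhn triangulation of `ℤⁿ`, each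
simplex being counted with its orientation. As a `finsum` it is `0` when infinitely many base
points contribute. -/
noncomputable def kuhnSum (F : (Fin (n + 1) → Fin n → ℤ) → ℤ) : ℤ :=
  ∑ᶠ z : Fin n → ℤ, ∑ σ : Perm (Fin n), (Perm.sign σ : ℤ) * F (kuhnVertex z σ)

lemma kuhnVertex_zero (z : Fin n → ℤ) (σ : Perm (Fin n)) : kuhnVertex z σ 0 = z := by
  ext i; simp [kuhnVertex]

lemma le_kuhnVertex (z : Fin n → ℤ) (σ : Perm (Fin n)) (k : Fin (n + 1)) :
    z ≤ kuhnVertex z σ k := by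
  intro i; unfold kuhnVertex; split_ifs <;> simp

lemma kuhnVertex_le (z : Fin n → ℤ) (σ : Perm (Fin n)) (k : Fin (n + 1)) :
    kuhnVertex z σ k ≤ z + 1 := by
  intro i; unfold kuhnVertex; split_ifs <;> simp

lemma kuhnVertex_injective (z : Fin n → ℤ) (σ : Perm (Fin n)) :
    Function.Injective (kuhnVertex z σ) := by
  refine Function.Injective.of_lt_imp_ne fun k l hkl h => ?_
  have hk : (k : ℕ) < n := (Fin.lt_def.1 hkl).trans_le (Fin.is_le l)
  have hval := congrFun h (σ ⟨k, hk⟩)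
  simp [kuhnVertex, hkl] at hval

lemma kuhnVertex_comp_succAbove_zero (z : Fin (m + 1) → ℤ) (σ : Perm (Fin (m + 1))) :
    kuhnVertex z σ ∘ (0 : Fin (m + 2)).succAbove =
      kuhnVertex (z + Pi.single (σ 0) 1) (σ * finRotate (m + 1)) ∘
        (Fin.last (m + 1)).succAbove := by
  ext k i
  obtain ⟨l, hl⟩ := (finRotate (m + 1)).surjective (σ.symm i)
  have hsymm : (σ * finRotate (m + 1)).symm i = l := by
    rw [Equiv.symm_apply_eq]; simp [Perm.mul_apply, hl]
  have hzero : i = σ 0 ↔ finRotate (m + 1) l = 0 := by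
    rw [hl, Equiv.symm_apply_eq]
  simp only [kuhnVertex, Function.comp, Fin.zero_succAbove, Fin.val_succ, Fin.succAbove_last,
    Fin.val_castSucc, Pi.add_apply, Pi.single_apply, hsymm, ← hl, hzero]
  obtain rfl | hlast := eq_or_ne l (Fin.last m)
  · have := k.2
    rw [finRotate_last]
    simp only [Fin.val_zero, Nat.zero_lt_succ, if_true, Fin.val_last]
    rw [if_neg (by omega), add_zero]
  · have hval := coe_finRotate_of_ne_last hlast
    have hne : finRotate (m + 1) l ≠ 0 := fun h => by simp [h] at hval
    simp only [if_neg hne, hval, add_zero, Nat.add_lt_add_iff_right]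

lemma kuhnVertex_mul_swap_comp_succAbove (z : Fin (m + 1) → ℤ) (σ : Perm (Fin (m + 1)))
    (i : Fin m) :
    kuhnVertex z (σ * swap i.castSucc i.succ) ∘ i.castSucc.succ.succAbove =
      kuhnVertex z σ ∘ i.castSucc.succ.succAbove := by
  ext k l
  have hsymm : (σ * swap i.castSucc i.succ).symm l = swap i.castSucc i.succ (σ.symm l) := by
    rw [Equiv.symm_apply_eq]; simp [Perm.mul_apply]
  have hne : (i.castSucc.succ.succAbove k : ℕ) ≠ i + 1 := fun h =>
    Fin.succAbove_ne i.castSucc.succ k (Fin.ext h)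
  simp only [kuhnVertex, Function.comp, hsymm]
  congr 1
  generalize σ.symm l = a
  rw [swap_apply_def]
  split_ifs <;> simp_all <;> omega

lemma sum_sign_mul_interior_face_eq_zero (φ : (Fin (m + 1) → Fin (m + 1) → ℤ) → ℤ)
    (z : Fin (m + 1) → ℤ) (i : Fin m) :
    ∑ σ : Perm (Fin (m + 1)),
      (Perm.sign σ : ℤ) * φ (kuhnVertex z σ ∘ i.castSucc.succ.succAbove) = 0 := by
  have hne : i.castSucc ≠ i.succ := Fin.castSucc_lt_succ.ne
  refine Finset.sum_involution (fun σ _ => σ * swap i.castSucc i.succ) ?_ ?_ (by simp)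
    (fun σ _ => by simp [mul_assoc])
  · intro σ _
    rw [kuhnVertex_mul_swap_comp_succAbove, Perm.sign_mul, Perm.sign_swap hne]
    simp
  · exact fun σ _ _ h => hne (swap_eq_one_iff.1 (mul_eq_left.1 h))

lemma finsum_sign_mul_first_face (φ : (Fin (m + 1) → Fin (m + 1) → ℤ) → ℤ)
    (σ : Perm (Fin (m + 1))) :
    ∑ᶠ z, (Perm.sign σ : ℤ) * φ (kuhnVertex z σ ∘ (0 : Fin (m + 2)).succAbove) =
      (-1) ^ m * ∑ᶠ z, (Perm.sign (σ * finRotate (m + 1)) : ℤ) *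
        φ (kuhnVertex z (σ * finRotate (m + 1)) ∘ (Fin.last (m + 1)).succAbove) := by
  have hsign : (Perm.sign σ : ℤ) = (-1) ^ m * (Perm.sign (σ * finRotate (m + 1)) : ℤ) := by
    have hsq : ((-1 : ℤ) ^ m) * (-1) ^ m = 1 := by rw [← mul_pow]; simp
    rw [Perm.sign_mul, sign_finRotate]
    push_cast
    linear_combination -(Perm.sign σ : ℤ) * hsq
  let T (z : Fin (m + 1) → ℤ) : ℤ := (Perm.sign (σ * finRotate (m + 1)) : ℤ) *
    φ (kuhnVertex z (σ * finRotate (m + 1)) ∘ (Fin.last (m + 1)).succAbove)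
  calc
    _ = ∑ᶠ z, (-1 : ℤ) ^ m • T (z + Pi.single (σ 0) 1) := finsum_congr fun z => by
      rw [hsign, kuhnVertex_comp_succAbove_zero, smul_eq_mul, mul_assoc]
    _ = (-1 : ℤ) ^ m • ∑ᶠ z, T (z + Pi.single (σ 0) 1) := (smul_finsum _ _).symm
    _ = (-1) ^ m * ∑ᶠ z, T z := by
      rw [smul_eq_mul, ← finsum_comp_equiv (Equiv.addRight (Pi.single (σ 0) 1)) (f := T)]
      rfl

/-- Every face lies in exactly two simplices, which count it with opposite signs. -/
theorem kuhnSum_coboundary_eq_zero (φ : (Fin (m + 1) → Fin (m + 1) → ℤ) → ℤ)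
    {B : Set (Fin (m + 1) → ℤ)} (hB : B.Finite)
    (hφ : ∀ z ∉ B, ∀ σ, ∀ j : Fin (m + 2), φ (kuhnVertex z σ ∘ j.succAbove) = 0) :
    kuhnSum (fun v : Fin (m + 2) → Fin (m + 1) → ℤ =>
      ∑ j : Fin (m + 2), (-1) ^ (j : ℕ) * φ (v ∘ j.succAbove)) = 0 := by
  let T (j : Fin (m + 2)) (σ : Perm (Fin (m + 1))) (z : Fin (m + 1) → ℤ) : ℤ :=
    (Perm.sign σ : ℤ) * φ (kuhnVertex z σ ∘ j.succAbove)
  have hT (j : Fin (m + 2)) (σ : Perm (Fin (m + 1))) : (Function.support (T j σ)).Finite :=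
    hB.subset fun z hz => by
      by_contra h
      exact hz (by simp only [T, hφ z h σ j, mul_zero])
  have hinterior (z : Fin (m + 1) → ℤ) :
      ∑ σ : Perm (Fin (m + 1)), (Perm.sign σ : ℤ) *
        ∑ j : Fin (m + 2), (-1) ^ (j : ℕ) * φ (kuhnVertex z σ ∘ j.succAbove) =
      ∑ σ, (T 0 σ z + (-1) ^ (m + 1) * T (Fin.last _) σ z) := by
    have hswap : ∑ σ : Perm (Fin (m + 1)), (Perm.sign σ : ℤ) *
        ∑ j : Fin (m + 2), (-1) ^ (j : ℕ) * φ (kuhnVertex z σ ∘ j.succAbove) =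
        ∑ j : Fin (m + 2), (-1) ^ (j : ℕ) * ∑ σ, T j σ z := by
      simp only [T, Finset.mul_sum]
      rw [Finset.sum_comm]
      simp only [mul_left_comm]
    have hzero (i : Fin m) : ∑ σ, T i.castSucc.succ σ z = 0 :=
      sum_sign_mul_interior_face_eq_zero φ z i
    rw [hswap, Fin.sum_univ_succ, Fin.sum_univ_castSucc, Finset.sum_add_distrib]
    simp [hzero, Finset.mul_sum]
  have houter : ∑ σ, ∑ᶠ z, T 0 σ z = (-1) ^ m * ∑ σ, ∑ᶠ z, T (Fin.last _) σ z := by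
    rw [← Equiv.sum_comp (Equiv.mulRight (finRotate (m + 1))) fun σ => ∑ᶠ z, T (Fin.last _) σ z,
      Finset.mul_sum]
    exact Finset.sum_congr rfl fun σ _ => finsum_sign_mul_first_face φ σ
  have hlast (σ : Perm (Fin (m + 1))) :
      (Function.support fun z => (-1) ^ (m + 1) * T (Fin.last _) σ z).Finite :=
    (hT _ σ).subset (Function.support_mul_subset_right _ _)
  have hmul (σ : Perm (Fin (m + 1))) : ∑ᶠ z, (-1) ^ (m + 1) * T (Fin.last _) σ z =
      (-1) ^ (m + 1) * ∑ᶠ z, T (Fin.last _) σ z := (smul_finsum ((-1 : ℤ) ^ (m + 1)) _).symm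
  rw [kuhnSum, finsum_congr hinterior, finsum_sum_comm _ _ fun σ _ =>
    ((hT 0 σ).union (hlast σ)).subset (Function.support_add _ _)]
  simp only [finsum_add_distrib (hT 0 _) (hlast _), hmul, Finset.sum_add_distrib, houter,
    ← Finset.mul_sum]
  ring

lemma finite_support_kuhn_term {F : (Fin (n + 1) → Fin n → ℤ) → ℤ} {B : Set (Fin n → ℤ)}
    (hB : B.Finite) (hF : ∀ z ∉ B, ∀ σ, F (kuhnVertex z σ) = 0) :
    (Function.support fun z => ∑ σ : Perm (Fin n),
      (Perm.sign σ : ℤ) * F (kuhnVertex z σ)).Finite :=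
  hB.subset fun z hz => by
    by_contra h
    exact hz (Finset.sum_eq_zero fun σ _ => by rw [hF z h σ, mul_zero])

lemma kuhnSum_congr {F F' : (Fin (n + 1) → Fin n → ℤ) → ℤ}
    (h : ∀ z σ, F (kuhnVertex z σ) = F' (kuhnVertex z σ)) : kuhnSum F = kuhnSum F' := by
  simp only [kuhnSum, h]

lemma kuhnSum_sub {F F' : (Fin (n + 1) → Fin n → ℤ) → ℤ} {B : Set (Fin n → ℤ)} (hB : B.Finite)
    (hF : ∀ z ∉ B, ∀ σ, F (kuhnVertex z σ) = 0) (hF' : ∀ z ∉ B, ∀ σ, F' (kuhnVertex z σ) = 0) :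
    kuhnSum (fun v => F v - F' v) = kuhnSum F - kuhnSum F' := by
  unfold kuhnSum
  rw [← finsum_sub_distrib (finite_support_kuhn_term hB hF) (finite_support_kuhn_term hB hF')]
  simp only [mul_sub, Finset.sum_sub_distrib]

lemma kuhnSum_sum {ι : Type*} (s : Finset ι) {F : ι → (Fin (n + 1) → Fin n → ℤ) → ℤ}
    {B : Set (Fin n → ℤ)} (hB : B.Finite)
    (hF : ∀ i ∈ s, ∀ z ∉ B, ∀ σ, F i (kuhnVertex z σ) = 0) :
    kuhnSum (fun v => ∑ i ∈ s, F i v) = ∑ i ∈ s, kuhnSum (F i) := by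
  unfold kuhnSum
  rw [← finsum_sum_comm _ _ fun i hi => finite_support_kuhn_term hB (hF i hi)]
  refine finsum_congr fun z => ?_
  simp only [Finset.mul_sum]
  exact Finset.sum_comm

lemma kuhnSum_const_mul (c : ℤ) (F : (Fin (n + 1) → Fin n → ℤ) → ℤ) :
    kuhnSum (fun v => c * F v) = c * kuhnSum F := by
  unfold kuhnSum
  rw [← smul_eq_mul, smul_finsum]
  simp only [smul_eq_mul, Finset.mul_sum, mul_left_comm]

end KuhnTriangulation

section Labellings

open Equiv Matrix

/-- The sign of the permutation `a` of the labels, and `0` if the labels `a` are not all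
distinct, written as a determinant so that it can be expanded along rows and columns. -/
def labelDet {m : ℕ} (a : Fin m → Fin m) : ℤ := det (of fun k => Pi.single (a k) 1)

lemma labelDet_eq_zero_of_not_surjective {m : ℕ} {a : Fin m → Fin m}
    (h : ¬ Function.Surjective a) : labelDet a = 0 := by
  rw [← Finite.injective_iff_surjective, Function.not_injective_iff] at h
  obtain ⟨i, j, hij, hne⟩ := h
  exact det_zero_of_row_eq hne (by ext; simp [hij])

lemma labelDet_id {m : ℕ} : labelDet (id : Fin m → Fin m) = 1 := by
  rw [labelDet, ← det_one (n := Fin m) (R := ℤ)]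
  congr 1
  ext i j
  simp [Pi.single_apply, one_apply, eq_comm]

lemma det_eq_zero_of_column_zero_eq_sum {R : Type*} [CommRing R] {n : ℕ}
    {A : Matrix (Fin (n + 1)) (Fin (n + 1)) R} (hA : ∀ i, A i 0 = ∑ j : Fin n, A i j.succ) :
    det A = 0 := by
  have hv : A *ᵥ Fin.cons (-1) (fun _ => 1) = 0 := by
    ext i
    simp [mulVec, dotProduct, Fin.sum_univ_succ, hA]
  have hdet := congrFun (congrArg (A.adjugate *ᵥ ·) hv) 0
  simpa [mulVec_mulVec, adjugate_mul, smul_mulVec] using hdet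

lemma sum_neg_one_pow_mul_det_vecCons_eq_zero {R : Type*} [CommRing R] {n : ℕ}
    {d : Fin (n + 1) → R} (hd : ∑ j, d j = 0) {r : Fin (n + 1) → Fin (n + 1) → R}
    (hr : ∀ k, ∑ j, r k j = 1) :
    ∑ j : Fin (n + 1), (-1) ^ (j : ℕ) * det (of (vecCons d (r ∘ j.succAbove))) = 0 := by
  let w : Fin (n + 2) → Fin (n + 1) → R := vecCons d r
  let A : Matrix (Fin (n + 2)) (Fin (n + 2)) R := of fun i => vecCons (∑ j, w i j) (w i)
  have hA : det A = 0 := det_eq_zero_of_column_zero_eq_sum fun i => by simp [A]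
  have hminor (j : Fin (n + 1)) :
      of (vecCons d (r ∘ j.succAbove)) = A.submatrix j.succ.succAbove Fin.succ := by
    ext i k
    refine Fin.cases ?_ (fun i => ?_) i <;> simp [A, w]
  rw [det_succ_column_zero, Fin.sum_univ_succ] at hA
  rw [← neg_eq_zero, ← hA, ← Finset.sum_neg_distrib]
  simp [A, w, hd, hr, hminor, pow_succ]

lemma det_update_sub_det {R : Type*} [CommRing R] {n : ℕ} (r : Fin (n + 1) → Fin (n + 1) → R)
    (k : Fin (n + 1)) (e : Fin (n + 1) → R) :
    det (of (Function.update r k e)) - det (of r) =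
      (-1) ^ (k : ℕ) * det (of (vecCons (e - r k) (r ∘ k.succAbove))) := by
  have hupdate (j : Fin (n + 1)) :
      (of (Function.update r k e)).submatrix k.succAbove j.succAbove =
        (of r).submatrix k.succAbove j.succAbove := by
    ext; simp
  have hcons (j : Fin (n + 1)) :
      (of (vecCons (e - r k) (r ∘ k.succAbove))).submatrix Fin.succ j.succAbove =
        (of r).submatrix k.succAbove j.succAbove := by
    ext; simp
  rw [det_succ_row _ k, det_succ_row (of r) k, det_succ_row_zero, ← Finset.sum_sub_distrib,
    Finset.mul_sum]
  refine Finset.sum_congr rfl fun j _ => ?_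
  simp only [hupdate, hcons, of_apply, Function.update_self, cons_val_zero, Pi.sub_apply, pow_add]
  ring

section Relabel

variable {X : Type*} {m : ℕ} {a : X → Fin (m + 1)} {x₀ : X} {β : Fin (m + 1)}

open Classical in
/-- The cochain on `(m - 1)`-simplices whose coboundary is the change of `labelDet` when the
label of the single point `x₀` becomes `β`. -/
noncomputable def relabelCochain (a : X → Fin (m + 1)) (x₀ : X) (β : Fin (m + 1))
    (u : Fin m → X) : ℤ :=
  if x₀ ∈ Set.range u then
    -det (of (vecCons (Pi.single β 1 - Pi.single (a x₀) 1) fun i => Pi.single (a (u i)) 1))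
  else 0

lemma relabelCochain_of_notMem_range {u : Fin m → X} (h : x₀ ∉ Set.range u) :
    relabelCochain a x₀ β u = 0 := if_neg h

lemma update_comp_of_notMem_range [DecidableEq X] {ι Y : Type*} {a : X → Y} {β : Y}
    {v : ι → X} (h : x₀ ∉ Set.range v) : Function.update a x₀ β ∘ v = a ∘ v :=
  funext fun i => Function.update_of_ne (fun hi => h ⟨i, hi⟩) _ _

lemma labelDet_update_comp_sub [DecidableEq X] {v : Fin (m + 1) → X} (hv : Function.Injective v) :
    labelDet (Function.update a x₀ β ∘ v) - labelDet (a ∘ v) =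
      ∑ j : Fin (m + 1), (-1) ^ (j : ℕ) * relabelCochain a x₀ β (v ∘ j.succAbove) := by
  by_cases hx : x₀ ∈ Set.range v
  · obtain ⟨k, rfl⟩ := hx
    let r (i : Fin (m + 1)) : Fin (m + 1) → ℤ := Pi.single (a (v i)) 1
    let d : Fin (m + 1) → ℤ := Pi.single β 1 - r k
    have hrow : (fun i => Pi.single ((Function.update a (v k) β ∘ v) i) 1) =
        Function.update r k (Pi.single β 1) := by
      ext i : 1
      obtain rfl | hi := eq_or_ne i k
      · simp
      · simp [r, hi, hv.ne hi]
    have hcochain (j : Fin (m + 1)) : relabelCochain a (v k) β (v ∘ j.succAbove) =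
        (if j = k then det (of (vecCons d (r ∘ k.succAbove))) else 0) -
          det (of (vecCons d (r ∘ j.succAbove))) := by
      obtain rfl | hj := eq_or_ne j k
      · rw [relabelCochain_of_notMem_range, if_pos rfl, sub_self]
        rintro ⟨i, hi⟩
        exact Fin.succAbove_ne j i (hv hi)
      · obtain ⟨i, hi⟩ := Fin.exists_succAbove_eq hj.symm
        rw [relabelCochain, if_pos ⟨i, by simp [hi]⟩, if_neg hj, zero_sub]
        rfl
    have hsum : ∑ j : Fin (m + 1), (-1) ^ (j : ℕ) * det (of (vecCons d (r ∘ j.succAbove))) = 0 :=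
      sum_neg_one_pow_mul_det_vecCons_eq_zero (by simp [d, r]) (by simp [r])
    rw [labelDet, labelDet, hrow]
    simp only [hcochain, mul_sub, Finset.sum_sub_distrib, hsum, mul_ite, mul_zero, sub_zero,
      Finset.sum_ite_eq', Finset.mem_univ, if_true]
    exact det_update_sub_det r k (Pi.single β 1)
  · rw [update_comp_of_notMem_range hx, sub_self, eq_comm]
    refine Finset.sum_eq_zero fun j _ => ?_
    rw [relabelCochain_of_notMem_range, mul_zero]
    rintro ⟨i, hi⟩
    exact hx ⟨_, hi⟩

end Relabel

variable {m : ℕ}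

lemma kuhnSum_labelDet_update_sub (a : (Fin (m + 1) → ℤ) → Fin (m + 2)) (x₀ : Fin (m + 1) → ℤ)
    (β : Fin (m + 2)) :
    kuhnSum (fun v => labelDet (Function.update a x₀ β ∘ v) - labelDet (a ∘ v)) = 0 := by
  refine (kuhnSum_congr (F' := fun v => ∑ j : Fin (m + 2),
    (-1) ^ (j : ℕ) * relabelCochain a x₀ β (v ∘ j.succAbove)) fun z σ =>
      labelDet_update_comp_sub (kuhnVertex_injective z σ)).trans ?_
  refine kuhnSum_coboundary_eq_zero _ (Set.finite_Icc (x₀ - 1) x₀) fun z hz σ j => ?_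
  refine relabelCochain_of_notMem_range ?_
  rintro ⟨i, hi⟩
  rw [← hi] at hz
  exact hz ⟨sub_le_iff_le_add.2 (kuhnVertex_le z σ _), le_kuhnVertex z σ _⟩

lemma kuhnSum_mul_labelDet_update {w : (Fin (m + 1) → ℤ) → ℤ} (hw : (Function.support w).Finite)
    (a : (Fin (m + 1) → ℤ) → Fin (m + 2)) (x₀ : Fin (m + 1) → ℤ) (β : Fin (m + 2))
    (H : ∀ z σ, (∃ k, w (kuhnVertex z σ k) ≠ w z) →
      ¬ Function.Surjective (a ∘ kuhnVertex z σ) ∧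
        ¬ Function.Surjective (Function.update a x₀ β ∘ kuhnVertex z σ)) :
    kuhnSum (fun v => w (v 0) * labelDet (Function.update a x₀ β ∘ v)) =
      kuhnSum (fun v => w (v 0) * labelDet (a ∘ v)) := by
  have hvanish (l : (Fin (m + 1) → ℤ) → Fin (m + 2)) (z) (hz : z ∉ Function.support w) (σ) :
      w (kuhnVertex z σ 0) * labelDet (l ∘ kuhnVertex z σ) = 0 := by
    rw [kuhnVertex_zero, Function.notMem_support.1 hz, zero_mul]
  rw [← sub_eq_zero, ← kuhnSum_sub hw (hvanish _) (hvanish _), ← mul_zero (w x₀),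
    ← kuhnSum_labelDet_update_sub a x₀ β, ← kuhnSum_const_mul]
  refine kuhnSum_congr fun z σ => ?_
  rw [kuhnVertex_zero, ← mul_sub]
  by_cases hx : x₀ ∈ Set.range (kuhnVertex z σ)
  · obtain ⟨k, rfl⟩ := hx
    by_cases hwk : w (kuhnVertex z σ k) = w z
    · rw [hwk]
    · obtain ⟨ha, hupdate⟩ := H z σ ⟨k, hwk⟩
      rw [labelDet_eq_zero_of_not_surjective ha, labelDet_eq_zero_of_not_surjective hupdate,
        sub_zero, mul_zero, mul_zero]
  · rw [update_comp_of_notMem_range hx, sub_self, mul_zero, mul_zero]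

/-- The labels are changed from `a` to `b` one vertex at a time, which is why `H` has to control
all mixtures `l` of the two. -/
theorem kuhnSum_mul_labelDet_congr {w : (Fin (m + 1) → ℤ) → ℤ} (hw : (Function.support w).Finite)
    {a b : (Fin (m + 1) → ℤ) → Fin (m + 2)}
    (H : ∀ z σ, ∀ l : (Fin (m + 1) → ℤ) → Fin (m + 2), (∀ x, l x = a x ∨ l x = b x) →
      (∃ k, w (kuhnVertex z σ k) ≠ w z) → ¬ Function.Surjective (l ∘ kuhnVertex z σ)) :
    kuhnSum (fun v => w (v 0) * labelDet (a ∘ v)) =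
      kuhnSum (fun v => w (v 0) * labelDet (b ∘ v)) := by
  have hmem (T : Finset (Fin (m + 1) → ℤ)) (x) :
      T.piecewise b a x = a x ∨ T.piecewise b a x = b x := by
    by_cases hx : x ∈ T <;> simp [hx]
  have hpartial (S : Finset (Fin (m + 1) → ℤ)) :
      kuhnSum (fun v => w (v 0) * labelDet (S.piecewise b a ∘ v)) =
        kuhnSum (fun v => w (v 0) * labelDet (a ∘ v)) := by
    induction S using Finset.induction_on with
    | empty => simp
    | insert x₀ S _ ih =>
      rw [← ih, Finset.piecewise_insert]
      refine kuhnSum_mul_labelDet_update hw _ _ _ fun z σ hk => ⟨H z σ _ (hmem S) hk, ?_⟩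
      rw [← Finset.piecewise_insert]
      exact H z σ _ (hmem _) hk
  let S : Finset (Fin (m + 1) → ℤ) :=
    hw.toFinset.biUnion fun z => Finset.univ.biUnion fun σ => Finset.univ.image (kuhnVertex z σ)
  rw [← hpartial S]
  refine kuhnSum_congr fun z σ => ?_
  by_cases hz : w z = 0
  · simp only [kuhnVertex_zero, hz, zero_mul]
  · congr 2
    ext k : 1
    refine Finset.piecewise_eq_of_mem _ _ _ ?_
    simp only [S, Finset.mem_biUnion, Finset.mem_univ, true_and, Finset.mem_image,
      Set.Finite.mem_toFinset]
    exact ⟨z, hz, σ, k, rfl⟩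

end Labellings

section SignLabel

variable {n : ℕ}

/-- The label of a vector `y`: the first coordinate in which `y` is negative, or the extra label
`Fin.last n` if there is none. -/
noncomputable def signLabel (y : Fin n → ℝ) : Fin (n + 1) :=
  sInf (Fin.castSucc '' {i | y i < 0})

lemma signLabel_le {y : Fin n → ℝ} {i : Fin n} (h : y i < 0) : signLabel y ≤ i.castSucc :=
  sInf_le ⟨i, h, rfl⟩

lemma neg_of_signLabel_eq {y : Fin n → ℝ} {i : Fin n} (h : signLabel y = i.castSucc) :
    y i < 0 := by
  have hne : (Fin.castSucc '' {i | y i < 0}).Nonempty := by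
    by_contra hempty
    rw [signLabel, Set.not_nonempty_iff_eq_empty.1 hempty, sInf_empty] at h
    exact (Fin.castSucc_lt_last i).ne h.symm
  obtain ⟨j, hj, hji⟩ := csInf_mem hne
  rwa [← Fin.castSucc_injective n (hji.trans h)]

lemma signLabel_mono : Monotone (signLabel : (Fin n → ℝ) → Fin (n + 1)) := by
  intro y y' h
  rcases Fin.eq_castSucc_or_eq_last (signLabel y') with ⟨i, hi⟩ | hlast
  · exact hi ▸ signLabel_le ((h i).trans_lt (neg_of_signLabel_eq hi))
  · exact hlast ▸ Fin.le_last _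

lemma signLabel_eq_of_forall_neg_iff {y : Fin n → ℝ} {k : Fin (n + 1)}
    (h : ∀ i, y i < 0 ↔ k ≤ i.castSucc) : signLabel y = k := by
  apply le_antisymm
  · rcases Fin.eq_castSucc_or_eq_last k with ⟨i, rfl⟩ | rfl
    · exact signLabel_le ((h i).2 le_rfl)
    · exact Fin.le_last _
  · rcases Fin.eq_castSucc_or_eq_last (signLabel y) with ⟨i, hi⟩ | hlast
    · exact hi ▸ (h i).1 (neg_of_signLabel_eq hi)
    · exact hlast ▸ Fin.le_last _

lemma exists_eventually_signLabel_ne {y : Fin n → ℝ} (hy : y ≠ 0) :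
    ∃ i, ∀ᶠ y' in nhds y, signLabel y' ≠ i := by
  obtain ⟨j, hj⟩ := Function.ne_iff.1 hy
  have hcont : ContinuousAt (fun y' : Fin n → ℝ => y' j) y := (continuous_apply j).continuousAt
  rcases lt_or_gt_of_ne hj with hneg | hpos
  · refine ⟨Fin.last n, ?_⟩
    filter_upwards [hcont.eventually_lt continuousAt_const hneg] with y' hy'
    exact ((signLabel_le hy').trans_lt (Fin.castSucc_lt_last j)).ne
  · refine ⟨j.castSucc, ?_⟩
    filter_upwards [continuousAt_const.eventually_lt hcont hpos] with y' hy' h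
    exact (neg_of_signLabel_eq h).not_gt hy'

lemma exists_forall_mem_of_surjective_signLabel {Y ι : Type*} [PseudoMetricSpace Y] {A : Set Y}
    (hA : IsCompact A) {g : Y → Fin n → ℝ} (hg : ContinuousOn g A) {W : ι → Set Y}
    (hW : ∀ i, IsOpen (W i)) (hzero : ∀ x ∈ A, g x = 0 → ∃ i, x ∈ W i) :
    ∃ δ > 0, ∀ p : Fin (n + 1) → Y, (∀ k, p k ∈ A) → (∀ k l, dist (p k) (p l) < δ) →
      Function.Surjective (fun k => signLabel (g (p k))) → ∃ i, ∀ k, p k ∈ W i := by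
  have hlocal : ∀ x ∈ A, ∃ U, IsOpen U ∧ x ∈ U ∧
      ((∃ i, U ⊆ W i) ∨ ∃ a, ∀ y ∈ U, y ∈ A → signLabel (g y) ≠ a) := by
    intro x hx
    by_cases hgx : g x = 0
    · obtain ⟨i, hi⟩ := hzero x hx hgx
      exact ⟨W i, hW i, hi, Or.inl ⟨i, subset_rfl⟩⟩
    · obtain ⟨a, ha⟩ := exists_eventually_signLabel_ne hgx
      have hmissing := (hg x hx).eventually ha
      rw [eventually_nhdsWithin_iff, eventually_nhds_iff] at hmissing
      obtain ⟨U, hUa, hU, hxU⟩ := hmissing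
      exact ⟨U, hU, hxU, Or.inr ⟨a, hUa⟩⟩
  choose! U hU hxU hcases using hlocal
  obtain ⟨δ, hδ, hlebesgue⟩ := lebesgue_number_lemma_of_metric (c := fun x : A => U x) hA
    (fun x => hU x x.2) fun x hx => Set.mem_iUnion.2 ⟨⟨x, hx⟩, hxU x hx⟩
  refine ⟨δ, hδ, fun p hpA hpδ hsurj => ?_⟩
  obtain ⟨⟨x, hx⟩, hball⟩ := hlebesgue (p 0) (hpA 0)
  have hpU (k) : p k ∈ U x := hball (hpδ k 0)
  rcases hcases x hx with ⟨i, hi⟩ | ⟨a, ha⟩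
  · exact ⟨i, fun k => hi (hpU k)⟩
  · obtain ⟨k, hk⟩ := hsurj a
    exact absurd hk (ha _ (hpU k) (hpA k))

end SignLabel

section LabelDegree

open Filter Metric

variable {n : ℕ}

/-- The point of the lattice `N⁻¹ ℤⁿ` with integer coordinates `v`. -/
noncomputable def gridPoint (N : ℕ) (v : Fin n → ℤ) : Fin n → ℝ := fun i => v i / N

lemma dist_gridPoint_kuhnVertex_le (N : ℕ) (z : Fin n → ℤ) (σ : Equiv.Perm (Fin n))
    (k l : Fin (n + 1)) :
    dist (gridPoint N (kuhnVertex z σ k)) (gridPoint N (kuhnVertex z σ l)) ≤ 1 / N := by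
  refine (dist_pi_le_iff (by positivity)).2 fun i => ?_
  have hk := And.intro (le_kuhnVertex z σ k i) (kuhnVertex_le z σ k i)
  have hl := And.intro (le_kuhnVertex z σ l i) (kuhnVertex_le z σ l i)
  simp only [Pi.add_apply, Pi.one_apply] at hk hl
  have habs : |kuhnVertex z σ k i - kuhnVertex z σ l i| ≤ 1 := by rw [abs_le]; omega
  simp only [gridPoint, Real.dist_eq, ← sub_div, abs_div, Nat.abs_cast]
  gcongr
  exact_mod_cast habs

lemma finite_setOf_gridPoint_mem {N : ℕ} (hN : 0 < N) {B : Set (Fin n → ℝ)}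
    (hB : Bornology.IsBounded B) : {z : Fin n → ℤ | gridPoint N z ∈ B}.Finite := by
  obtain ⟨R, hR⟩ := hB.subset_closedBall 0
  refine (Set.finite_Icc (fun _ => -⌈R * N⌉) fun _ => ⌈R * N⌉).subset fun z hz => ?_
  have hN' : (0 : ℝ) < N := by exact_mod_cast hN
  have habs (i : Fin n) : |z i| ≤ ⌈R * N⌉ := by
    have hdist := (dist_le_pi_dist (gridPoint N z) 0 i).trans (hR hz)
    simp only [gridPoint, Real.dist_eq, Pi.zero_apply, sub_zero, abs_div, Nat.abs_cast,
      div_le_iff₀ hN'] at hdist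
    exact_mod_cast hdist.trans (Int.le_ceil _)
  exact ⟨fun i => (abs_le.1 (habs i)).1, fun i => (abs_le.1 (habs i)).2⟩

open Classical in
/-- The degree of `g` over `0` on `A`, computed at scale `N`: the signed number of simplices of
the Kuhn triangulation of mesh `1 / N` which have all vertices in `A` and carry all sign labels
of `g` (a Sperner count). For compact `A` and continuous `g` with no zeros on the frontier of `A`
it is the Brouwer degree once `N` is large. -/
noncomputable def labelDegree (N : ℕ) (A : Set (Fin n → ℝ)) (g : (Fin n → ℝ) → Fin n → ℝ) : ℤ :=
  kuhnSum fun v => if ∀ k, gridPoint N (v k) ∈ A then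
    labelDet fun k => signLabel (g (gridPoint N (v k))) else 0

lemma labelDegree_congr (N : ℕ) {A : Set (Fin n → ℝ)} {g g' : (Fin n → ℝ) → Fin n → ℝ}
    (h : Set.EqOn g g' A) : labelDegree N A g = labelDegree N A g' := by
  refine kuhnSum_congr fun z σ => ?_
  split_ifs with hA
  · simp only [h (hA _)]
  · rfl

lemma eventually_pos_and_one_div_lt {δ : ℝ} (hδ : 0 < δ) :
    ∀ᶠ N : ℕ in atTop, 0 < N ∧ (1 / N : ℝ) < δ :=
  (eventually_gt_atTop 0).and (tendsto_one_div_atTop_nhds_zero_nat.eventually (gt_mem_nhds hδ))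

section Homotopy

variable {m N : ℕ} {ι : Type*} {A : ι → Set (Fin (m + 1) → ℝ)}
  {g : ι → (Fin (m + 1) → ℝ) → Fin (m + 1) → ℝ} {W : Set (Fin (m + 1) → ℝ)}

open Classical in
lemma labelDegree_eq_kuhnSum_mul {A W : Set (Fin (m + 1) → ℝ)}
    {g : (Fin (m + 1) → ℝ) → Fin (m + 1) → ℝ}
    (hWA : ∀ z σ k l, gridPoint N (kuhnVertex z σ k) ∈ W → gridPoint N (kuhnVertex z σ l) ∈ A)
    (hsurj : ∀ z σ, (∀ k, gridPoint N (kuhnVertex z σ k) ∈ A) →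
      Function.Surjective (fun k => signLabel (g (gridPoint N (kuhnVertex z σ k)))) →
      ∀ k, gridPoint N (kuhnVertex z σ k) ∈ W) :
    labelDegree N A g = kuhnSum fun v => (if gridPoint N (v 0) ∈ W then 1 else 0) *
      labelDet ((fun x => signLabel (g (gridPoint N x))) ∘ v) := by
  refine kuhnSum_congr fun z σ => ?_
  by_cases hlabels :
      Function.Surjective fun k => signLabel (g (gridPoint N (kuhnVertex z σ k)))
  · by_cases hA : ∀ k, gridPoint N (kuhnVertex z σ k) ∈ A
    · rw [if_pos hA, if_pos (hsurj z σ hA hlabels 0), one_mul]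
      rfl
    · rw [if_neg hA, if_neg fun h => hA fun k => hWA z σ 0 k h, zero_mul]
  · have hdet : labelDet ((fun x => signLabel (g (gridPoint N x))) ∘ kuhnVertex z σ) = 0 :=
      labelDet_eq_zero_of_not_surjective hlabels
    rw [labelDet_eq_zero_of_not_surjective hlabels, ite_self, hdet, mul_zero]

lemma labelDegree_eq_of_mixed_labels (hW : {z : Fin (m + 1) → ℤ | gridPoint N z ∈ W}.Finite)
    (hWA : ∀ i z σ k l, gridPoint N (kuhnVertex z σ k) ∈ W →
      gridPoint N (kuhnVertex z σ l) ∈ A i)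
    (hsurj : ∀ z σ, ∀ τ : Fin (m + 2) → ι, (∀ k, gridPoint N (kuhnVertex z σ k) ∈ A (τ k)) →
      Function.Surjective (fun k => signLabel (g (τ k) (gridPoint N (kuhnVertex z σ k)))) →
      ∀ k, gridPoint N (kuhnVertex z σ k) ∈ W) (i j : ι) :
    labelDegree N (A i) (g i) = labelDegree N (A j) (g j) := by
  classical
  let w (x : Fin (m + 1) → ℤ) : ℤ := if gridPoint N x ∈ W then 1 else 0
  have hw : (Function.support w).Finite := hW.subset fun x hx => by simpa [w] using hx
  rw [labelDegree_eq_kuhnSum_mul (hWA i) fun z σ => hsurj z σ fun _ => i,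
    labelDegree_eq_kuhnSum_mul (hWA j) fun z σ => hsurj z σ fun _ => j]
  refine kuhnSum_mul_labelDet_congr hw fun z σ l hl ⟨k, hk⟩ hlabels => ?_
  obtain ⟨k', hk'⟩ : ∃ k', gridPoint N (kuhnVertex z σ k') ∈ W := by
    by_contra! h
    have h0 := h 0
    rw [kuhnVertex_zero] at h0
    exact hk (by simp only [w, h, h0, if_false])
  have hmixed (a : Fin (m + 2)) : ∃ τ : ι,
      signLabel (g τ (gridPoint N (kuhnVertex z σ a))) = l (kuhnVertex z σ a) :=
    (hl (kuhnVertex z σ a)).elim (fun h => ⟨i, h.symm⟩) fun h => ⟨j, h.symm⟩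
  choose τ hτ using hmixed
  have hmem := hsurj z σ τ (fun a => hWA _ z σ k' a hk') (by simp only [hτ]; exact hlabels)
  have h0 := hmem 0
  rw [kuhnVertex_zero] at h0
  exact hk (by simp only [w, hmem, h0, if_true])

end Homotopy

lemma mem_thickening_of_dist_le {Y : Type*} [PseudoMetricSpace Y] {Z : Set Y} {x y : Y}
    {r d : ℝ} (hx : x ∈ thickening r Z) (hd : dist y x ≤ d) : y ∈ thickening (r + d) Z := by
  rw [mem_thickening_iff] at *
  obtain ⟨z, hz, hxz⟩ := hx
  exact ⟨z, hz, by linarith [dist_triangle y x z]⟩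

section Homotopy

variable {m : ℕ} {A : Set (unitInterval × (Fin (m + 1) → ℝ))}
  {g : unitInterval × (Fin (m + 1) → ℝ) → Fin (m + 1) → ℝ}

lemma eventually_isLocallyConstant_labelDegree (hA : IsCompact A) (hg : ContinuousOn g A)
    (hzero : ∀ p ∈ A, g p = 0 → p ∈ interior A) :
    ∀ᶠ N : ℕ in atTop, IsLocallyConstant fun t : unitInterval =>
      labelDegree N {x | (t, x) ∈ A} fun x => g (t, x) := by
  let Z : Set (unitInterval × (Fin (m + 1) → ℝ)) := A ∩ g ⁻¹' {0}
  have hZ : IsCompact Z := hA.of_isClosed_subset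
    (hg.preimage_isClosed_of_isClosed hA.isClosed isClosed_singleton) Set.inter_subset_left
  obtain ⟨ε, hε, hthick⟩ : ∃ ε > 0, thickening (ε + ε + ε) Z ⊆ A := by
    obtain ⟨r, hr, h⟩ := hZ.exists_thickening_subset_open isOpen_interior fun p hp =>
      hzero p hp.1 hp.2
    exact ⟨r / 3, by positivity, by rw [add_thirds]; exact h.trans interior_subset⟩
  obtain ⟨δ, hδ, hlabels⟩ := exists_forall_mem_of_surjective_signLabel hA hg
    (W := fun _ : Unit => thickening ε Z) (fun _ => isOpen_thickening)
    fun p hp hgp => ⟨(), self_subset_thickening hε _ ⟨hp, hgp⟩⟩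
  filter_upwards [eventually_pos_and_one_div_lt (lt_min hε hδ)] with N ⟨hN, hNδ⟩
  have hmesh (z σ) (k l : Fin (m + 2)) : dist (gridPoint N (kuhnVertex z σ k))
      (gridPoint N (kuhnVertex z σ l)) < min ε δ :=
    (dist_gridPoint_kuhnVertex_le N z σ k l).trans_lt hNδ
  refine (IsLocallyConstant.iff_eventually_eq _).2 fun t => ?_
  filter_upwards [ball_mem_nhds t (half_pos (lt_min hε hδ))] with s hs
  let T := ball t (min ε δ / 2)
  have hdist (s s' : T) : dist (s : unitInterval) s' < min ε δ := by
    linarith [dist_triangle_right (s : unitInterval) s' t, mem_ball.1 s.2, mem_ball.1 s'.2]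
  let t' : T := ⟨t, mem_ball_self (half_pos (lt_min hε hδ))⟩
  refine labelDegree_eq_of_mixed_labels (ι := T) (A := fun s => {x | (s.1, x) ∈ A})
    (g := fun s x => g (s, x)) (W := {x | (t, x) ∈ thickening (ε + ε) Z}) ?_ ?_ ?_ ⟨s, hs⟩ t'
  · exact (finite_setOf_gridPoint_mem hN (hZ.isBounded.thickening (δ := ε + ε)).image_snd).subset
      fun z hz => ⟨_, hz, rfl⟩
  · refine fun s z σ k l hk => hthick (mem_thickening_of_dist_le hk ?_)
    exact max_le ((hdist s t').le.trans (min_le_left _ _))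
      ((hmesh z σ l k).le.trans (min_le_left _ _))
  · intro z σ τ hτ hsurj k
    obtain ⟨_, hmem⟩ := hlabels (fun k => (τ k, gridPoint N (kuhnVertex z σ k))) hτ
      (fun k l => (max_lt (hdist _ _) (hmesh z σ k l)).trans_le (min_le_right _ _)) hsurj
    refine mem_thickening_of_dist_le (hmem k) (max_le ?_ ?_)
    · exact (hdist t' _).le.trans (min_le_left _ _)
    · exact (dist_self _).trans_le hε.le

theorem eventually_labelDegree_eq_of_homotopy (hA : IsCompact A) (hg : ContinuousOn g A)
    (hzero : ∀ p ∈ A, g p = 0 → p ∈ interior A) :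
    ∀ᶠ N : ℕ in atTop, labelDegree N {x | (0, x) ∈ A} (fun x => g (0, x)) =
      labelDegree N {x | (1, x) ∈ A} fun x => g (1, x) := by
  filter_upwards [eventually_isLocallyConstant_labelDegree hA hg hzero] with N hN
  exact hN.apply_eq_of_preconnectedSpace 0 1

end Homotopy

open Classical in
theorem eventually_labelDegree_eq_sum {ι : Type*} {A : Set (Fin n → ℝ)} (hA : IsCompact A)
    {g : (Fin n → ℝ) → Fin n → ℝ} (hg : ContinuousOn g A) {s : Finset ι}
    {B : ι → Set (Fin n → ℝ)} (hBA : ∀ i ∈ s, B i ⊆ A)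
    (hdisj : (s : Set ι).PairwiseDisjoint B)
    (hzero : ∀ x ∈ A, g x = 0 → ∃ i ∈ s, x ∈ interior (B i)) :
    ∀ᶠ N : ℕ in atTop, labelDegree N A g = ∑ i ∈ s, labelDegree N (B i) g := by
  obtain ⟨δ, hδ, hlabels⟩ := exists_forall_mem_of_surjective_signLabel hA hg
    (W := fun i : s => interior (B i)) (fun _ => isOpen_interior) fun x hx hgx => by
      simpa using hzero x hx hgx
  filter_upwards [eventually_pos_and_one_div_lt hδ] with N ⟨hN, hNδ⟩
  unfold labelDegree
  rw [← kuhnSum_sum s (finite_setOf_gridPoint_mem hN hA.isBounded) fun i hi z hz σ =>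
    if_neg fun h => hz (by
      simpa only [Set.mem_ofPred_eq, kuhnVertex_zero] using hBA i hi (h 0))]
  refine kuhnSum_congr fun z σ => ?_
  by_cases hsurj : Function.Surjective fun k => signLabel (g (gridPoint N (kuhnVertex z σ k)))
  swap
  · simp only [labelDet_eq_zero_of_not_surjective hsurj, ite_self, Finset.sum_const_zero]
  by_cases hmem : ∀ k, gridPoint N (kuhnVertex z σ k) ∈ A
  · obtain ⟨⟨i, hi⟩, hki⟩ := hlabels _ hmem
      (fun k l => (dist_gridPoint_kuhnVertex_le N z σ k l).trans_lt hNδ) hsurj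
    have hkB (k) := interior_subset (hki k)
    rw [if_pos hmem, Finset.sum_eq_single_of_mem i hi, if_pos hkB]
    exact fun j hj hji => if_neg fun h =>
      Set.disjoint_left.1 (hdisj hj hi hji) (h 0) (hkB 0)
  · rw [if_neg hmem, eq_comm]
    exact Finset.sum_eq_zero fun i hi => if_neg fun h => hmem fun k => hBA i hi (h k)

section Identity

variable {y : (Fin n → ℤ) → Fin n → ℝ} {c : Fin n → ℤ}

lemma signLabel_kuhnVertex_sub_one (hy : ∀ v i, y v i < 0 ↔ v i < c i) (k : Fin (n + 1)) :
    signLabel (y (kuhnVertex (c - 1) 1 k)) = k := by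
  refine signLabel_eq_of_forall_neg_iff fun i => ?_
  simp only [hy, kuhnVertex, Pi.sub_apply, Pi.one_apply, Fin.le_def, Fin.val_castSucc,
    ← Equiv.Perm.inv_def, inv_one, Equiv.Perm.coe_one, id]
  split_ifs <;> omega

lemma signLabel_kuhnVertex_eq_of_surjective (hmono : Monotone y) {z : Fin n → ℤ}
    {σ : Equiv.Perm (Fin n)}
    (hsurj : Function.Surjective fun k => signLabel (y (kuhnVertex z σ k))) (k : Fin (n + 1)) :
    signLabel (y (kuhnVertex z σ k)) = k := by
  have hvertex : Monotone (kuhnVertex z σ) := by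
    intro k l hkl i
    have : (k : ℕ) ≤ l := hkl
    simp only [kuhnVertex]
    split_ifs <;> omega
  have hstrict : StrictMono fun k => signLabel (y (kuhnVertex z σ k)) :=
    ((signLabel_mono.comp hmono).comp hvertex).strictMono_of_injective
      (Finite.injective_iff_surjective.2 hsurj)
  have hid := (hstrict.range_inj strictMono_id).1 (by rw [hsurj.range_eq, Set.range_id])
  exact congrFun hid k

lemma eq_of_surjective_signLabel_kuhnVertex (hy : ∀ v i, y v i < 0 ↔ v i < c i)
    (hmono : Monotone y) {z : Fin n → ℤ} {σ : Equiv.Perm (Fin n)}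
    (hsurj : Function.Surjective fun k => signLabel (y (kuhnVertex z σ k))) :
    z = c - 1 ∧ σ = 1 := by
  have hlabel := signLabel_kuhnVertex_eq_of_surjective hmono hsurj
  have hcoord (i : Fin n) : z i = c i - 1 ∧ σ.symm i = i := by
    have hlt := (hy _ _).1 (neg_of_signLabel_eq (hlabel i.castSucc))
    have hge : ¬ kuhnVertex z σ i.succ i < c i := fun h =>
      Fin.castSucc_lt_succ.not_ge (hlabel i.succ ▸ signLabel_le ((hy _ _).2 h))
    simp only [kuhnVertex, Fin.val_castSucc, Fin.val_succ] at hlt hge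
    split_ifs at hlt hge <;> omega
  refine ⟨funext fun i => (hcoord i).1, Equiv.ext fun i => ?_⟩
  exact ((Equiv.symm_apply_eq σ).1 (hcoord i).2).symm

end Identity

lemma gridPoint_sub_neg_iff {N : ℕ} (hN : 0 < N) (q : Fin n → ℝ) (v : Fin n → ℤ) (i : Fin n) :
    (gridPoint N v - q) i < 0 ↔ v i < ⌈N * q i⌉ := by
  have hN' : (0 : ℝ) < N := by exact_mod_cast hN
  simp only [gridPoint, Pi.sub_apply, sub_neg, Int.lt_ceil]
  rw [div_lt_iff₀ hN', mul_comm]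

lemma gridPoint_mono (N : ℕ) : Monotone (gridPoint N : (Fin n → ℤ) → Fin n → ℝ) := by
  intro v v' h i
  have := h i
  simp only [gridPoint]
  gcongr

lemma dist_gridPoint_kuhnVertex_ceil_sub_one_le {N : ℕ} (hN : 0 < N) (q : Fin n → ℝ)
    (σ : Equiv.Perm (Fin n)) (k : Fin (n + 1)) :
    dist (gridPoint N (kuhnVertex ((fun i => ⌈N * q i⌉) - 1) σ k)) q ≤ 1 / N := by
  have : (0 : ℝ) < N := by exact_mod_cast hN
  refine (dist_pi_le_iff (by positivity)).2 fun i => ?_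
  set v := kuhnVertex ((fun i => ⌈N * q i⌉) - 1) σ k
  have hlower : (⌈N * q i⌉ : ℝ) - 1 ≤ v i := by exact_mod_cast le_kuhnVertex _ σ k i
  have hupper : (v i : ℝ) ≤ ⌈N * q i⌉ - 1 + 1 := by exact_mod_cast kuhnVertex_le _ σ k i
  have hdist : gridPoint N v i - q i = (v i - N * q i) / N := by simp only [gridPoint]; field_simp
  rw [Real.dist_eq, hdist, abs_div, Nat.abs_cast]
  gcongr
  rw [abs_le]
  constructor <;> linarith [Int.le_ceil (N * q i), Int.ceil_lt_add_one (N * q i)]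

theorem eventually_labelDegree_sub_const_eq_one {A : Set (Fin n → ℝ)} {q : Fin n → ℝ}
    (hA : A ∈ nhds q) : ∀ᶠ N : ℕ in atTop, labelDegree N A (fun x => x - q) = 1 := by
  obtain ⟨δ, hδ, hball⟩ := Metric.mem_nhds_iff.1 hA
  filter_upwards [eventually_pos_and_one_div_lt hδ] with N ⟨hN, hNδ⟩
  let c : Fin n → ℤ := fun i => ⌈N * q i⌉
  have hy := gridPoint_sub_neg_iff hN q
  have hmem (k) : gridPoint N (kuhnVertex (c - 1) 1 k) ∈ A :=
    hball ((dist_gridPoint_kuhnVertex_ceil_sub_one_le hN q 1 k).trans_lt hNδ)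
  have hzero (z : Fin n → ℤ) (σ : Equiv.Perm (Fin n)) (h : ¬ (z = c - 1 ∧ σ = 1)) :
      labelDet (fun k => signLabel (gridPoint N (kuhnVertex z σ k) - q)) = 0 :=
    labelDet_eq_zero_of_not_surjective fun hsurj => h <|
      eq_of_surjective_signLabel_kuhnVertex hy
        (fun _ _ hv => sub_le_sub_right (gridPoint_mono N hv) q) hsurj
  have hone : labelDet (fun k => signLabel (gridPoint N (kuhnVertex (c - 1) 1 k) - q)) = 1 := by
    have hid : (fun k => signLabel (gridPoint N (kuhnVertex (c - 1) 1 k) - q)) = id :=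
      funext (signLabel_kuhnVertex_sub_one (y := fun v => gridPoint N v - q) hy)
    rw [hid, labelDet_id]
  rw [labelDegree, kuhnSum, finsum_eq_single _ (c - 1), Finset.sum_eq_single 1]
  · simp only [if_pos hmem, hone, Equiv.Perm.sign_one, Units.val_one, mul_one]
  · exact fun σ _ hσ => by simp only [hzero _ _ fun h => hσ h.2, ite_self, mul_zero]
  · simp
  · exact fun z hz => Finset.sum_eq_zero fun σ _ => by
      simp only [hzero _ _ fun h => hz h.1, ite_self, mul_zero]

end LabelDegree

section StraightLineHomotopy

open Filter

variable {m : ℕ} {ι : Type*} {A B : Set (Fin (m + 1) → ℝ)}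
  {G : (Fin (m + 1) → ℝ) → Fin (m + 1) → ℝ}

theorem eventually_labelDegree_sub_eq_one_of_lineMap (hB : IsCompact B) (hG : ContinuousOn G B)
    {q : Fin (m + 1) → ℝ} (hq : q ∈ interior B)
    (hzero : ∀ x ∈ B, ∀ t : unitInterval, AffineMap.lineMap x (G x) (t : ℝ) = q →
      x ∈ interior B) :
    ∀ᶠ N : ℕ in atTop, labelDegree N B (fun x => G x - q) = 1 := by
  have hcont : ContinuousOn (fun p : unitInterval × (Fin (m + 1) → ℝ) =>
      AffineMap.lineMap p.2 (G p.2) (p.1 : ℝ) - q) (Set.univ ×ˢ B) := by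
    have := hG.comp (continuousOn_snd (s := (Set.univ : Set unitInterval) ×ˢ B)) fun p hp => hp.2
    simp only [AffineMap.lineMap_apply_module]
    fun_prop
  have hhom := eventually_labelDegree_eq_of_homotopy (isCompact_univ.prod hB) hcont
    fun p hp h => by
      rw [interior_prod_eq, interior_univ]
      exact ⟨trivial, hzero p.2 hp.2 p.1 (sub_eq_zero.1 h)⟩
  filter_upwards [hhom,
    eventually_labelDegree_sub_const_eq_one (mem_interior_iff_mem_nhds.1 hq)] with N hN hone
  simpa [hone] using hN.symm

theorem eventually_labelDegree_comp_eq_of_lineMap (hA : IsCompact A) (hB : IsCompact B)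
    (hAB : A ⊆ B) (hG : ContinuousOn G A) {φ : (Fin (m + 1) → ℝ) → Fin (m + 1) → ℝ}
    (hφ : ContinuousOn φ B)
    (hzero : ∀ x ∈ B, ∀ t : unitInterval, AffineMap.lineMap x (φ x) (t : ℝ) ∈ A →
      G (AffineMap.lineMap x (φ x) (t : ℝ)) = 0 →
        x ∈ interior B ∧ AffineMap.lineMap x (φ x) (t : ℝ) ∈ interior A) :
    ∀ᶠ N : ℕ in atTop, labelDegree N {x ∈ B | φ x ∈ A} (fun x => G (φ x)) =
      labelDegree N A G := by
  let H (p : unitInterval × (Fin (m + 1) → ℝ)) : Fin (m + 1) → ℝ :=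
    AffineMap.lineMap p.2 (φ p.2) (p.1 : ℝ)
  have hH : ContinuousOn H (Set.univ ×ˢ B) := by
    have := hφ.comp (continuousOn_snd (s := (Set.univ : Set unitInterval) ×ˢ B)) fun p hp => hp.2
    simp only [H, AffineMap.lineMap_apply_module]
    fun_prop
  have hUB := isCompact_univ (X := unitInterval).prod hB
  have hcompact : IsCompact (Set.univ ×ˢ B ∩ H ⁻¹' A) := hUB.of_isClosed_subset
    (hH.preimage_isClosed_of_isClosed hUB.isClosed hA.isClosed) Set.inter_subset_left
  have hhom := eventually_labelDegree_eq_of_homotopy hcompact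
    (hG.comp (hH.mono Set.inter_subset_left) fun p hp => hp.2) fun p hp h => by
      obtain ⟨hx, hHx⟩ := hzero p.2 hp.1.2 p.1 hp.2 h
      have hpB : Set.univ ×ˢ B ∈ nhds p :=
        prod_mem_nhds univ_mem (mem_interior_iff_mem_nhds.1 hx)
      exact mem_interior_iff_mem_nhds.2 (inter_mem hpB
        ((hH.continuousAt hpB).preimage_mem_nhds (mem_interior_iff_mem_nhds.1 hHx)))
  filter_upwards [hhom] with N hN
  have hstart : {x | (0, x) ∈ Set.univ ×ˢ B ∩ H ⁻¹' A} = A := by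
    ext x
    simpa [H] using fun hx => hAB hx
  have hend : {x | (1, x) ∈ Set.univ ×ˢ B ∩ H ⁻¹' A} = {x ∈ B | φ x ∈ A} := by
    ext x
    simp [H]
  rw [hstart, hend] at hN
  simpa [H] using hN.symm

theorem eventually_labelDegree_eq_card_mul (hA : IsCompact A) (hB : IsCompact B) (hAB : A ⊆ B)
    (hG : ContinuousOn G B) {s : Finset ι} {φ : ι → (Fin (m + 1) → ℝ) → Fin (m + 1) → ℝ}
    (hφ : ∀ i ∈ s, ContinuousOn (φ i) B) (hGφ : ∀ i ∈ s, ∀ x ∈ B, G (φ i x) = G x)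
    (hdisj : ∀ x ∈ B, ∀ i ∈ s, ∀ j ∈ s, φ i x ∈ A → φ j x ∈ A → i = j)
    (hline : ∀ i ∈ s, ∀ x ∈ B, ∀ t : unitInterval, AffineMap.lineMap x (φ i x) (t : ℝ) ∈ A →
      G (AffineMap.lineMap x (φ i x) (t : ℝ)) = 0 →
        x ∈ interior B ∧ AffineMap.lineMap x (φ i x) (t : ℝ) ∈ interior A)
    (hzero : ∀ x ∈ B, G x = 0 → ∃ i ∈ s, φ i x ∈ A) :
    ∀ᶠ N : ℕ in atTop, labelDegree N B G = s.card * labelDegree N A G := by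
  have hinterior (x) (hx : x ∈ B) (hGx : G x = 0) :
      ∃ i ∈ s, x ∈ interior {x ∈ B | φ i x ∈ A} := by
    obtain ⟨i, hi, hφA⟩ := hzero x hx hGx
    obtain ⟨hxB, hxA⟩ := hline i hi x hx 1 (by simpa using hφA) (by simp [hGφ i hi x hx, hGx])
    rw [Set.Icc.coe_one, AffineMap.lineMap_apply_one, mem_interior_iff_mem_nhds] at hxA
    rw [mem_interior_iff_mem_nhds] at hxB
    exact ⟨i, hi, mem_interior_iff_mem_nhds.2
      (inter_mem hxB (((hφ i hi).continuousAt hxB).preimage_mem_nhds hxA))⟩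
  have hpairwise : (s : Set ι).PairwiseDisjoint fun i => {x ∈ B | φ i x ∈ A} := by
    intro i hi j hj hij
    exact Set.disjoint_left.2 fun x hx hx' => hij (hdisj x hx.1 i hi j hj hx.2 hx'.2)
  have hsum := eventually_labelDegree_eq_sum hB hG (fun i _ => Set.sep_subset B _) hpairwise
    hinterior
  have hterm : ∀ᶠ N : ℕ in atTop, ∀ i ∈ s,
      labelDegree N {x ∈ B | φ i x ∈ A} (fun x => G (φ i x)) = labelDegree N A G :=
    (eventually_all_finset s).2 fun i hi =>
      eventually_labelDegree_comp_eq_of_lineMap hA hB hAB (hG.mono hAB) (hφ i hi) (hline i hi)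
  filter_upwards [hsum, hterm] with N hN hi
  have hcongr (i) (his : i ∈ s) :
      labelDegree N {x ∈ B | φ i x ∈ A} G = labelDegree N A G :=
    (labelDegree_congr N fun x hx => (hGφ i his x hx.1).symm).trans (hi i his)
  rw [hN, Finset.sum_congr rfl hcongr, Finset.sum_const, nsmul_eq_mul]

end StraightLineHomotopy

section FiniteZeros

open MeasureTheory Metric

variable {E : Type*} [NormedAddCommGroup E] [NormedSpace ℝ E] [FiniteDimensional ℝ E]

lemma exists_norm_lt_forall_det_fderiv_ne_zero {g : E → E} (hg : Differentiable ℝ g) {ε : ℝ}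
    (hε : 0 < ε) : ∃ w, ‖w‖ < ε ∧ ∀ x, g x = w → (fderiv ℝ g x).det ≠ 0 := by
  borelize E
  have hsard : Measure.addHaar (g '' {x | (fderiv ℝ g x).det = 0}) = 0 :=
    addHaar_image_eq_zero_of_det_fderivWithin_eq_zero _
      (fun x _ => (hg x).hasFDerivAt.hasFDerivWithinAt) fun _ hx => hx
  by_contra! h
  have hball : ball 0 ε ⊆ g '' {x | (fderiv ℝ g x).det = 0} := fun w hw => by
    obtain ⟨x, hxw, hx⟩ := h w (mem_ball_zero_iff.1 hw)
    exact ⟨x, hx, hxw⟩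
  exact (measure_ball_pos Measure.addHaar (0 : E) hε).ne' (measure_mono_null hball hsard)

lemma finite_setOf_mem_and_eq_of_det_fderiv_ne_zero {g : E → E} (hg : Differentiable ℝ g)
    {C : Set E} (hC : IsCompact C) {w : E} (hw : ∀ x, g x = w → (fderiv ℝ g x).det ≠ 0) :
    {x ∈ C | g x = w}.Finite := by
  have hclosed := hC.inter_right (isClosed_eq hg.continuous (continuous_const (y := w)))
  refine hclosed.finite (isDiscrete_iff_nhdsNE.2 fun x hx => ?_)
  have hequiv := ((fderiv ℝ g x).toContinuousLinearEquivOfDetNeZero (hw x hx.2)).antilipschitz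
  have hne := (hg x).hasFDerivAt.eventually_ne (c := w) ⟨_, hequiv⟩
  rw [Filter.inf_principal_eq_bot]
  exact hne.mono fun y hy hmem => hy hmem.2

theorem exists_norm_sub_lt_and_finite_zeros {X : Type*} [TopologicalSpace X] {j : X → E}
    (hj : Continuous j) (hinj : Function.Injective j) {C : Set X} (hC : IsCompact C) {F : X → E}
    (hF : ContinuousOn F C) {ε : ℝ} (hε : 0 < ε) :
    ∃ P : X → E, Continuous P ∧ (∀ x ∈ C, ‖P x - F x‖ < ε) ∧ {x ∈ C | P x = 0}.Finite := by
  have := isCompact_iff_compactSpace.1 hC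
  have hemb : Topology.IsClosedEmbedding fun x : C => j x :=
    (hj.comp continuous_subtype_val).isClosedEmbedding (hinj.comp Subtype.val_injective)
  have := TietzeExtension.of_tvs ℝ (E := E)
  obtain ⟨F', hF'⟩ := ContinuousMap.exists_extension' hemb ⟨C.domRestrict F, hF.domRestrict⟩
  obtain ⟨g, hg, hgF, -⟩ := F'.continuous.exists_contDiff_approx 1
    (continuous_const (y := ε / 2)) fun _ => half_pos hε
  have hdiff := hg.differentiable one_ne_zero
  obtain ⟨w, hwε, hw⟩ := exists_norm_lt_forall_det_fderiv_ne_zero hdiff (half_pos hε)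
  refine ⟨fun x => g (j x) - w, by fun_prop, fun x hx => ?_, ?_⟩
  · have hFx : F' (j x) = F x := congrFun hF' ⟨x, hx⟩
    have hdist := hgF (j x)
    rw [hFx, dist_eq_norm] at hdist
    calc ‖g (j x) - w - F x‖ = ‖(g (j x) - F x) - w‖ := by rw [sub_right_comm]
      _ ≤ ‖g (j x) - F x‖ + ‖w‖ := norm_sub_le _ _
      _ < ε := by linarith
  · have hfinite := finite_setOf_mem_and_eq_of_det_fderiv_ne_zero hdiff (hC.image hj) hw
    exact (hfinite.preimage hinj.injOn).subset fun x hx =>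
      ⟨Set.mem_image_of_mem j hx.1, sub_eq_zero.1 hx.2⟩

end FiniteZeros

section InvariantPerturbation

open Function Set

variable {X E : Type*} {h : X → X} {p : ℕ}

lemma apply_iterate_eq {Y : Type*} {F : X → Y} (hF : ∀ x, F (h x) = F x) (i : ℕ) (x : X) :
    F (h^[i] x) = F x := by
  have hsemiconj : Semiconj F h id := hF
  simpa using hsemiconj.iterate_right i x

lemma exists_iterate_iterate_eq {x : X} (hp : 0 < p) (hx : IsPeriodicPt h p x) (i : ℕ) :
    ∃ k, h^[k] (h^[i] x) = x := by
  refine ⟨p * i - i, ?_⟩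
  rw [← iterate_add_apply, Nat.sub_add_cancel (Nat.le_mul_of_pos_left i hp)]
  exact hx.mul_const i

/-- The set of points whose orbit under `h` meets `S`; as only forward iterates are taken, it is
the union of the orbits meeting `S` only for `h` with all points periodic. -/
def orbitSaturation (h : X → X) (S : Set X) : Set X := {x | ∃ i, h^[i] x ∈ S}

/-- A slice for an action of `ℤ/p` generated by `h`: a set disjoint from all its nontrivial
translates. -/
def IsSlice (h : X → X) (p : ℕ) (S : Set X) : Prop := ∀ x ∈ S, ∀ i, h^[i] x ∈ S → p ∣ i

lemma IsSlice.mono {S T : Set X} (hT : IsSlice h p T) (hST : S ⊆ T) : IsSlice h p S :=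
  fun x hx i hi => hT x (hST hx) i (hST hi)

lemma isSlice_singleton {x : X} (hx : minimalPeriod h x = p) : IsSlice h p {x} := by
  rintro _ rfl i hi
  exact hx ▸ IsPeriodicPt.minimalPeriod_dvd hi

lemma IsSlice.iterate_notMem {S : Set X} (hS : IsSlice h p S) {x : X} (hx : x ∈ S) {i : ℕ}
    (hi : 0 < i) (hip : i < p) : h^[i] x ∉ S :=
  fun hmem => Nat.not_dvd_of_pos_of_lt hi hip (hS x hx i hmem)

lemma IsSlice.eq_of_iterate_mem {S : Set X} (hS : IsSlice h p S) {x : X} {i j : ℕ} (hi : i < p)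
    (hj : j < p) (hxi : h^[i] x ∈ S) (hxj : h^[j] x ∈ S) : i = j := by
  wlog hij : i ≤ j generalizing i j
  · exact (this hj hi hxj hxi (le_of_not_ge hij)).symm
  have hdvd : p ∣ j - i := hS _ hxi _ (by rwa [← iterate_add_apply, Nat.sub_add_cancel hij])
  have := Nat.eq_zero_of_dvd_of_lt hdvd (by omega)
  omega

lemma iterate_mem_orbitSaturation_iff (hp : 0 < p) {x : X} (hx : IsPeriodicPt h p x) {S : Set X}
    {i : ℕ} : h^[i] x ∈ orbitSaturation h S ↔ x ∈ orbitSaturation h S := by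
  constructor
  · rintro ⟨k, hk⟩
    exact ⟨k + i, by rwa [iterate_add_apply]⟩
  · rintro ⟨k, hk⟩
    obtain ⟨l, hl⟩ := exists_iterate_iterate_eq hp hx i
    exact ⟨k + l, by rwa [iterate_add_apply, hl]⟩

variable [TopologicalSpace X]

lemma isCompact_orbitSaturation (hh : Continuous h) (hp : 0 < p) (hper : ∀ x, IsPeriodicPt h p x)
    {S : Set X} (hS : IsCompact S) : IsCompact (orbitSaturation h S) := by
  have heq : orbitSaturation h S = ⋃ i ∈ Finset.range p, h^[i] '' S := by
    ext x
    simp only [mem_iUnion, Finset.mem_range, exists_prop]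
    constructor
    · rintro ⟨i, hi⟩
      obtain ⟨k, hk⟩ := exists_iterate_iterate_eq hp (hper x) i
      refine ⟨k % p, Nat.mod_lt k hp, h^[i] x, hi, ?_⟩
      rw [(hper _).iterate_mod_apply, hk]
    · rintro ⟨i, -, y, hy, rfl⟩
      obtain ⟨k, hk⟩ := exists_iterate_iterate_eq hp (hper y) i
      exact ⟨k, by rwa [hk]⟩
  rw [heq]
  exact (Finset.range p).isCompact_biUnion fun i _ => hS.image (hh.iterate i)

lemma isOpen_orbitSaturation (hh : Continuous h) {S : Set X} (hS : IsOpen S) :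
    IsOpen (orbitSaturation h S) := by
  simp only [orbitSaturation, ofPred_exists]
  exact isOpen_iUnion fun i => hS.preimage (hh.iterate i)

lemma exists_isOpen_disjoint_preimage [T2Space X] {f : X → X} (hf : Continuous f) {L : Set X}
    (hL : IsCompact L) (hdisj : Disjoint L (f '' L)) :
    ∃ O, IsOpen O ∧ L ⊆ O ∧ Disjoint O (f ⁻¹' O) := by
  obtain ⟨U, W, hU, hW, hLU, hLW, hUW⟩ :=
    SeparatedNhds.of_isCompact_isCompact hL (hL.image hf) hdisj
  refine ⟨U ∩ f ⁻¹' W, hU.inter (hW.preimage hf),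
    subset_inter hLU (image_subset_iff.1 hLW), ?_⟩
  exact disjoint_left.2 fun x hx hfx => disjoint_left.1 hUW hfx.1 hx.2

lemma IsSlice.exists_isOpen_superset [T2Space X] (hh : Continuous h) (hp : 0 < p)
    (hper : ∀ x, IsPeriodicPt h p x) {L : Set X} (hL : IsCompact L) (hslice : IsSlice h p L) :
    ∃ O, IsOpen O ∧ L ⊆ O ∧ IsSlice h p O := by
  have hsep (i) (hi : i ∈ Finset.Ioo 0 p) :
      ∃ O, IsOpen O ∧ L ⊆ O ∧ Disjoint O (h^[i] ⁻¹' O) := by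
    rw [Finset.mem_Ioo] at hi
    refine exists_isOpen_disjoint_preimage (hh.iterate i) hL (disjoint_right.2 ?_)
    rintro _ ⟨x, hx, rfl⟩
    exact hslice.iterate_notMem hx hi.1 hi.2
  choose! O hO hLO hdisj using hsep
  refine ⟨⋂ i ∈ Finset.Ioo 0 p, O i, isOpen_biInter_finset hO, subset_iInter₂ hLO, ?_⟩
  intro x hx i hi
  rw [← (hper x).iterate_mod_apply] at hi
  by_contra hdvd
  have hmem : i % p ∈ Finset.Ioo 0 p :=
    Finset.mem_Ioo.2 ⟨Nat.pos_of_ne_zero (mt Nat.dvd_of_mod_eq_zero hdvd), Nat.mod_lt i hp⟩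
  exact disjoint_left.1 (hdisj _ hmem) (mem_iInter₂.1 hx _ hmem) (mem_iInter₂.1 hi _ hmem)

lemma exists_isCompact_isSlice_mem_nhds [T2Space X] [LocallyCompactSpace X] (hh : Continuous h)
    (hp : 0 < p) (hper : ∀ x, minimalPeriod h x = p) (x : X) :
    ∃ C D : Set X, IsCompact C ∧ IsCompact D ∧ C ∈ nhds x ∧ C ⊆ interior D ∧ IsSlice h p D := by
  obtain ⟨O, hO, hxO, hslice⟩ := (isSlice_singleton (hper x)).exists_isOpen_superset hh hp
    (fun y => hper y ▸ isPeriodicPt_minimalPeriod h y) isCompact_singleton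
  obtain ⟨D, hD, hxD, hDO⟩ := exists_compact_subset hO (hxO rfl)
  obtain ⟨C, hC, hxC, hCD⟩ := exists_compact_subset isOpen_interior hxD
  exact ⟨C, D, hC, hD, mem_interior_iff_mem_nhds.1 hxC, hCD, hslice.mono hDO⟩

lemma IsSlice.isCompact_inter {V : Set X} (hV : IsOpen V) (hh : ∀ i, ContinuousOn h^[i] V)
    (hp : 0 < p) {Z : Set X} (hZ : IsCompact Z) (hZV : Z ⊆ V) (hper : ∀ x ∈ Z, IsPeriodicPt h p x)
    {O : Set X} (hO : IsOpen O) (hslice : IsSlice h p O) (hcover : Z ⊆ orbitSaturation h O) :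
    IsCompact (Z ∩ O) := by
  have heq : Z ∩ O = Z \ ⋃ i ∈ Finset.Ioo 0 p, V ∩ h^[i] ⁻¹' O := by
    ext x
    simp only [mem_inter_iff, mem_sdiff, mem_iUnion, Finset.mem_Ioo, mem_preimage, not_exists,
      not_and, and_congr_right_iff]
    refine fun hx => ⟨fun hxO i hi _ => hslice.iterate_notMem hxO hi.1 hi.2, fun hxO => ?_⟩
    obtain ⟨i, hi⟩ := hcover hx
    rw [← (hper x hx).iterate_mod_apply] at hi
    rcases (i % p).eq_zero_or_pos with h0 | h0
    · simpa [h0] using hi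
    · exact absurd hi (hxO _ ⟨h0, Nat.mod_lt i hp⟩ (hZV hx))
  rw [heq]
  exact hZ.diff (isOpen_biUnion fun i _ => (hh i).isOpen_inter_preimage hV hO)

section Zeros

variable [T2Space X] [Zero E] [TopologicalSpace E] [T2Space E]

lemma exists_isSlice_of_finite_zeros (hh : Continuous h) (hp : 0 < p)
    (hper : ∀ x, IsPeriodicPt h p x) {G : X → E} (hG : Continuous G)
    (hGh : ∀ x, G (h x) = G x) {K O : Set X} (hK : IsCompact K) (hKh : MapsTo h K K)
    (hO : IsOpen O) (hslice : IsSlice h p O) (hcover : ∀ x ∈ K, G x = 0 → x ∈ orbitSaturation h O)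
    {C : Set X} (hC : IsSlice h p C) (hfin : {x ∈ C | G x = 0}.Finite) :
    ∃ O', IsOpen O' ∧ IsSlice h p O' ∧
      ∀ x ∈ K ∪ orbitSaturation h C, G x = 0 → x ∈ orbitSaturation h O' := by
  have hback (x : X) (i : ℕ) (hx : h^[i] x ∈ K) : x ∈ K := by
    obtain ⟨k, hk⟩ := exists_iterate_iterate_eq hp (hper x) i
    exact hk ▸ hKh.iterate k hx
  set L₁ : Set X := {x ∈ K ∩ O | G x = 0} with hL₁
  set L₂ : Set X := {x ∈ C | G x = 0} \ K
  have hL₁_compact : IsCompact L₁ := by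
    have hZ : IsCompact {x ∈ K | G x = 0} := hK.inter_right (isClosed_eq hG continuous_const)
    have heq : L₁ = {x ∈ K | G x = 0} ∩ O := by
      ext x; simp only [hL₁, mem_ofPred_eq, mem_inter_iff]; tauto
    rw [heq]
    exact hslice.isCompact_inter isOpen_univ (fun i => (hh.iterate i).continuousOn) hp hZ
      (subset_univ _) (fun x _ => hper x) hO fun x hx => hcover x hx.1 hx.2
  have hL_slice : IsSlice h p (L₁ ∪ L₂) := by
    rintro x (hx | hx) i (hi | hi)
    · exact hslice x hx.1.2 i hi.1.2
    · exact absurd (hKh.iterate i hx.1.1) hi.2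
    · exact absurd (hback x i hi.1.1) hx.2
    · exact hC x hx.1.1 i hi.1.1
  obtain ⟨O', hO', hLO', hslice'⟩ :=
    hL_slice.exists_isOpen_superset hh hp hper (hL₁_compact.union hfin.sdiff.isCompact)
  refine ⟨O', hO', hslice', fun x hx hGx => ?_⟩
  have hzero (i : ℕ) : G (h^[i] x) = 0 := (apply_iterate_eq hGh i x).trans hGx
  by_cases hxK : x ∈ K
  · obtain ⟨i, hi⟩ := hcover x hxK hGx
    exact ⟨i, hLO' (Or.inl ⟨⟨hKh.iterate i hxK, hi⟩, hzero i⟩)⟩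
  · obtain ⟨i, hi⟩ := hx.resolve_left hxK
    exact ⟨i, hLO' (Or.inr ⟨⟨hi, hzero i⟩, mt (hback x i) hxK⟩)⟩

end Zeros

variable [NormedAddCommGroup E] [NormedSpace ℝ E]

lemma exists_invariant_eqOn_of_isSlice [T2Space X] [LocallyCompactSpace X] (hh : Continuous h)
    (hp : 0 < p) (hper : ∀ x, IsPeriodicPt h p x) {C D : Set X} (hC : IsCompact C)
    (hD : IsCompact D) (hCD : C ⊆ interior D) (hslice : IsSlice h p D) {Q : X → E}
    (hQ : Continuous Q) {ε : ℝ} (hε : 0 < ε) (hQε : ∀ x ∈ D, ‖Q x‖ < ε / p) :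
    ∃ θ : X → E, Continuous θ ∧ (∀ x, θ (h x) = θ x) ∧ (∀ x, ‖θ x‖ ≤ ε) ∧
      HasCompactSupport θ ∧ EqOn θ Q C := by
  obtain ⟨ψ, hψ1, hψ0, -, hψ⟩ := exists_continuous_one_zero_of_isCompact hC
    (isOpen_interior (s := D)).isClosed_compl (disjoint_compl_right_iff_subset.2 hCD)
  set θ₀ : X → E := fun x => ψ x • Q x
  have hθ₀_eq_zero (x) (hx : x ∉ D) : θ₀ x = 0 := by
    have hψx : ψ x = 0 := hψ0 fun hmem => hx (interior_subset hmem)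
    simp only [θ₀, hψx, zero_smul]
  have : (0 : ℝ) < p := by exact_mod_cast hp
  have hθ₀_le (x) : ‖θ₀ x‖ ≤ ε / p := by
    by_cases hx : x ∈ D
    · calc ‖θ₀ x‖ = ψ x * ‖Q x‖ := by rw [norm_smul, Real.norm_of_nonneg (hψ x).1]
        _ ≤ ‖Q x‖ := mul_le_of_le_one_left (norm_nonneg _) (hψ x).2
        _ ≤ ε / p := (hQε x hx).le
    · rw [hθ₀_eq_zero x hx, norm_zero]
      positivity
  refine ⟨birkhoffSum h θ₀ p, ?_, fun x => ?_, fun x => ?_, ?_, fun x hx => ?_⟩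
  · exact continuous_finsetSum _ fun i _ => (ψ.continuous.smul hQ).comp (hh.iterate i)
  · rw [← sub_eq_zero, birkhoffSum_apply_sub_birkhoffSum, (hper x).eq, sub_self]
  · calc ‖birkhoffSum h θ₀ p x‖ ≤ ∑ _i ∈ Finset.range p, ε / p :=
          norm_sum_le_of_le _ fun i _ => hθ₀_le _
      _ = ε := by rw [Finset.sum_const, Finset.card_range, nsmul_eq_mul]; field_simp
  · refine HasCompactSupport.intro (isCompact_orbitSaturation hh hp hper hD) fun x hx => ?_
    exact Finset.sum_eq_zero fun i _ => hθ₀_eq_zero _ fun hi => hx ⟨i, hi⟩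
  · have hxD : x ∈ D := interior_subset (hCD hx)
    have hψx : ψ x = 1 := hψ1 hx
    rw [birkhoffSum, Finset.sum_eq_single_of_mem 0 (Finset.mem_range.2 hp), iterate_zero_apply]
    · simp only [θ₀, hψx, one_smul]
    · exact fun i hi h0 => hθ₀_eq_zero _
        (hslice.iterate_notMem hxD (Nat.pos_of_ne_zero h0) (Finset.mem_range.1 hi))

variable [FiniteDimensional ℝ E] [T2Space X] [LocallyCompactSpace X] {j : X → E}

lemma exists_perturbation_zeros_subset_union (hj : Continuous j) (hinj : Injective j)
    (hh : Continuous h) (hp : 0 < p) (hper : ∀ x, IsPeriodicPt h p x) {G : X → E}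
    (hG : Continuous G) (hGh : ∀ x, G (h x) = G x) {K O : Set X} (hK : IsCompact K)
    (hKh : MapsTo h K K) (hO : IsOpen O) (hslice : IsSlice h p O)
    (hcover : ∀ x ∈ K, G x = 0 → x ∈ orbitSaturation h O) {C D : Set X} (hC : IsCompact C)
    (hD : IsCompact D) (hCD : C ⊆ interior D) (hDslice : IsSlice h p D) {ε : ℝ} (hε : 0 < ε) :
    ∃ θ : X → E, Continuous θ ∧ (∀ x, θ (h x) = θ x) ∧ (∀ x, ‖θ x‖ ≤ ε) ∧
      HasCompactSupport θ ∧ ∃ O', IsOpen O' ∧ IsSlice h p O' ∧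
        ∀ x ∈ K ∪ orbitSaturation h C, G x + θ x = 0 → x ∈ orbitSaturation h O' := by
  obtain ⟨η, hη, hηG⟩ : ∃ η, 0 < η ∧ ∀ x ∈ K \ orbitSaturation h O, η ≤ ‖G x‖ :=
    (hK.diff (isOpen_orbitSaturation hh hO)).exists_forall_le' hG.norm.continuousOn
      fun x hx => norm_pos_iff.2 fun h0 => hx.2 (hcover x hx.1 h0)
  set ε' := min ε (η / 2)
  have hε' : 0 < ε' := lt_min hε (half_pos hη)
  have hp0 : (0 : ℝ) < p := by exact_mod_cast hp
  obtain ⟨P, hP, hPG, hPfin⟩ :=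
    exists_norm_sub_lt_and_finite_zeros hj hinj hD hG.continuousOn (div_pos hε' hp0)
  obtain ⟨θ, hθ, hθh, hθε, hθsupp, hθP⟩ :=
    exists_invariant_eqOn_of_isSlice hh hp hper hC hD hCD hDslice (hP.sub hG) hε' hPG
  refine ⟨θ, hθ, hθh, fun x => (hθε x).trans (min_le_left _ _), hθsupp, ?_⟩
  refine exists_isSlice_of_finite_zeros hh hp hper (hG.add hθ)
    (fun x => by simp only [Pi.add_apply, hGh, hθh]) hK hKh hO hslice (fun x hx hzero => ?_)
    (hDslice.mono (hCD.trans interior_subset)) ?_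
  · by_contra hxO
    have hnorm : ‖G x‖ = ‖θ x‖ := by rw [eq_neg_of_add_eq_zero_left hzero, norm_neg]
    have := hηG x ⟨hx, hxO⟩
    have := (hθε x).trans (min_le_right _ _)
    linarith
  · refine hPfin.subset fun x hx => ⟨interior_subset (hCD hx.1), ?_⟩
    simpa [hθP hx.1] using hx.2

lemma exists_perturbation_zeros_biUnion {ι : Type*} (hj : Continuous j) (hinj : Injective j)
    (hh : Continuous h) (hp : 0 < p) (hper : ∀ x, IsPeriodicPt h p x) {F : X → E}
    (hF : Continuous F) (hFh : ∀ x, F (h x) = F x) {C D : ι → Set X} (hC : ∀ i, IsCompact (C i))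
    (hD : ∀ i, IsCompact (D i)) (hCD : ∀ i, C i ⊆ interior (D i))
    (hDslice : ∀ i, IsSlice h p (D i)) (s : Finset ι) {ε : ℝ} (hε : 0 < ε) :
    ∃ θ : X → E, Continuous θ ∧ (∀ x, θ (h x) = θ x) ∧ (∀ x, ‖θ x‖ ≤ ε) ∧
      HasCompactSupport θ ∧ ∃ O, IsOpen O ∧ IsSlice h p O ∧
        ∀ x ∈ ⋃ i ∈ s, orbitSaturation h (C i), F x + θ x = 0 → x ∈ orbitSaturation h O := by
  classical
  induction s using Finset.induction_on generalizing ε with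
  | empty =>
    exact ⟨0, continuous_const, fun _ => rfl, fun _ => by simpa using hε.le, .zero, ∅,
      isOpen_empty, fun _ hx => hx.elim, by simp⟩
  | insert i s _ ih =>
    obtain ⟨θ, hθ, hθh, hθε, hθsupp, O, hO, hslice, hcover⟩ := ih (half_pos hε)
    have hcompact : IsCompact (⋃ i ∈ s, orbitSaturation h (C i)) :=
      s.isCompact_biUnion fun i _ => isCompact_orbitSaturation hh hp hper (hC i)
    have hinvariant : MapsTo h (⋃ i ∈ s, orbitSaturation h (C i))
        (⋃ i ∈ s, orbitSaturation h (C i)) :=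
      mapsTo_iUnion₂_iUnion₂ fun i _ x hx =>
        (iterate_mem_orbitSaturation_iff (i := 1) hp (hper x)).2 hx
    obtain ⟨θ', hθ', hθh', hθε', hθsupp', hzeros⟩ := exists_perturbation_zeros_subset_union hj hinj
      hh hp hper (hF.add hθ) (fun x => by simp only [Pi.add_apply, hFh, hθh]) hcompact
      hinvariant hO hslice hcover (hC i) (hD i) (hCD i) (hDslice i) (half_pos hε)
    refine ⟨θ + θ', hθ.add hθ', fun x => by simp only [Pi.add_apply, hθh, hθh'], fun x => ?_,
      hθsupp.add hθsupp', ?_⟩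
    · exact (norm_add_le _ _).trans (by linarith [hθε x, hθε' x])
    · simpa only [Finset.set_biUnion_insert, union_comm, Pi.add_apply, add_assoc] using hzeros

theorem exists_invariant_perturbation (hj : Continuous j) (hinj : Injective j)
    (hh : Continuous h) (hp : 0 < p) (hper : ∀ x, minimalPeriod h x = p) {F : X → E}
    (hF : Continuous F) (hFh : ∀ x, F (h x) = F x) {K : Set X} (hK : IsCompact K) {ε : ℝ}
    (hε : 0 < ε) :
    ∃ θ : X → E, Continuous θ ∧ (∀ x, θ (h x) = θ x) ∧ (∀ x, ‖θ x‖ ≤ ε) ∧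
      HasCompactSupport θ ∧ ∃ O, IsOpen O ∧ IsSlice h p O ∧
        ∀ x ∈ K, F x + θ x = 0 → x ∈ orbitSaturation h O := by
  choose C D hC hD hCx hCD hDslice using exists_isCompact_isSlice_mem_nhds hh hp hper
  obtain ⟨t, -, ht⟩ := hK.elim_nhds_subcover C fun x _ => hCx x
  obtain ⟨θ, hθ, hθh, hθε, hθsupp, O, hO, hslice, hcover⟩ :=
    exists_perturbation_zeros_biUnion hj hinj hh hp
      (fun x => hper x ▸ isPeriodicPt_minimalPeriod h x) hF hFh hC hD hCD hDslice t hε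
  refine ⟨θ, hθ, hθh, hθε, hθsupp, O, hO, hslice, fun x hx => hcover x ?_⟩
  exact iUnion₂_mono (fun y _ => show C y ⊆ orbitSaturation h (C y) from fun z hz => ⟨0, hz⟩)
    (ht hx)

end InvariantPerturbation

section PeriodicOn

open Function Set Filter

variable {X Y : Type*} [TopologicalSpace X] [TopologicalSpace Y] {h : X → X} {V : Set X} {p : ℕ}

/-- `h` maps the open set `V` continuously to itself and satisfies `h^p = id` there, that is, it
generates an action of `ℤ/p` on `V`. -/
structure PeriodicOn (h : X → X) (V : Set X) (p : ℕ) : Prop where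
  isOpen : IsOpen V
  mapsTo : MapsTo h V V
  continuousOn : ContinuousOn h V
  pos : 0 < p
  isPeriodicPt : ∀ x ∈ V, IsPeriodicPt h p x

namespace PeriodicOn

lemma mapsTo_iterate (H : PeriodicOn h V p) (i : ℕ) : MapsTo h^[i] V V := H.mapsTo.iterate i

lemma continuousOn_iterate (H : PeriodicOn h V p) (i : ℕ) : ContinuousOn h^[i] V :=
  H.continuousOn.iterate H.mapsTo i

lemma apply_iterate_eq {Z : Type*} {F : X → Z} (H : PeriodicOn h V p)
    (hF : ∀ x ∈ V, F (h x) = F x) (i : ℕ) {x : X} (hx : x ∈ V) : F (h^[i] x) = F x := by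
  induction i with
  | zero => rfl
  | succ i ih => rw [iterate_succ_apply', hF _ (H.mapsTo_iterate i hx), ih]

lemma isFixedPt_of_isFixedPt_apply (H : PeriodicOn h V p) {x : X} (hx : x ∈ V)
    (hfix : IsFixedPt h (h x)) : IsFixedPt h x := by
  obtain ⟨k, hk⟩ := exists_iterate_iterate_eq H.pos (H.isPeriodicPt x hx) 1
  rw [iterate_one, (hfix.iterate k).eq] at hk
  exact hk

lemma isOpen_nonfixed [T2Space X] (H : PeriodicOn h V p) : IsOpen {x ∈ V | h x ≠ x} :=
  (H.continuousOn.prodMk continuousOn_id).isOpen_inter_preimage H.isOpen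
    isClosed_diagonal.isOpen_compl

lemma isFixedPt_of_mem_closure [T2Space X] (H : PeriodicOn h V p) {x : X} (hxV : x ∈ V)
    (hx : x ∈ closure (fixedPoints h)) : IsFixedPt h x := by
  by_contra hne
  obtain ⟨y, hy, hyfix⟩ := mem_closure_iff.1 hx _ H.isOpen_nonfixed ⟨hxV, hne⟩
  exact hy.2 hyfix

lemma nonfixed [T2Space X] (H : PeriodicOn h V p) : PeriodicOn h {x ∈ V | h x ≠ x} p where
  isOpen := H.isOpen_nonfixed
  mapsTo _ hx := ⟨H.mapsTo hx.1, mt (H.isFixedPt_of_isFixedPt_apply hx.1) hx.2⟩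
  continuousOn := H.continuousOn.mono fun _ hx => hx.1
  pos := H.pos
  isPeriodicPt x hx := H.isPeriodicPt x hx.1

lemma diff_singleton [T1Space X] (H : PeriodicOn h V p) {y : X} (hy : h y = y) :
    PeriodicOn h (V \ {y}) p where
  isOpen := H.isOpen.sdiff isClosed_singleton
  mapsTo x hx := ⟨H.mapsTo hx.1, fun hxy => hx.2 <| by
    rw [mem_singleton_iff] at hxy
    have hfix : h x = x := H.isFixedPt_of_isFixedPt_apply hx.1 (hxy ▸ hy)
    exact hfix.symm.trans hxy⟩
  continuousOn := H.continuousOn.mono sdiff_subset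
  pos := H.pos
  isPeriodicPt x hx := H.isPeriodicPt x hx.1

end PeriodicOn

lemma iterate_conj_apply (φ : OpenPartialHomeomorph X Y) (hV : MapsTo h V V) (hφ : V ⊆ φ.source)
    (i : ℕ) {x : X} (hx : x ∈ V) : (φ ∘ h ∘ φ.symm)^[i] (φ x) = φ (h^[i] x) := by
  induction i with
  | zero => rfl
  | succ i ih =>
    have hmem : h^[i] x ∈ φ.source := hφ (hV.iterate i hx)
    rw [iterate_succ_apply', ih, iterate_succ_apply', comp_apply, comp_apply, φ.left_inv hmem]

lemma isPeriodicPt_conj_iff (φ : OpenPartialHomeomorph X Y) (hV : MapsTo h V V)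
    (hφ : V ⊆ φ.source) {i : ℕ} {x : X} (hx : x ∈ V) :
    IsPeriodicPt (φ ∘ h ∘ φ.symm) i (φ x) ↔ IsPeriodicPt h i x := by
  rw [IsPeriodicPt, IsFixedPt, iterate_conj_apply φ hV hφ i hx]
  exact φ.injOn.eq_iff (hφ (hV.iterate i hx)) (hφ hx)

lemma mem_interior_fixedPoints_conj_iff (φ : OpenPartialHomeomorph X Y) (hVo : IsOpen V)
    (hV : MapsTo h V V) (hφ : V ⊆ φ.source) {x : X} (hx : x ∈ V) :
    φ x ∈ interior (fixedPoints (φ ∘ h ∘ φ.symm)) ↔ x ∈ interior (fixedPoints h) := by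
  simp only [mem_interior_iff_mem_nhds, ← φ.map_nhds_eq (hφ hx), mem_map]
  refine congr_sets ?_
  filter_upwards [hVo.mem_nhds hx] with y hy
  exact isPeriodicPt_conj_iff (i := 1) φ hV hφ hy

lemma PeriodicOn.conj (H : PeriodicOn h V p) (φ : OpenPartialHomeomorph X Y) (hφ : V ⊆ φ.source) :
    PeriodicOn (φ ∘ h ∘ φ.symm) (φ '' V) p where
  isOpen := φ.isOpen_image_of_subset_source H.isOpen hφ
  mapsTo := by
    rintro _ ⟨x, hx, rfl⟩
    exact ⟨h x, H.mapsTo hx, (iterate_conj_apply φ H.mapsTo hφ 1 hx).symm⟩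
  continuousOn := by
    have hsymm : MapsTo φ.symm (φ '' V) V := by
      rintro _ ⟨x, hx, rfl⟩
      rwa [φ.left_inv (hφ hx)]
    exact φ.continuousOn.comp (H.continuousOn.comp
      (φ.continuousOn_symm.mono (image_subset_iff.2 fun x hx => φ.map_source (hφ hx))) hsymm)
      fun x hx => hφ (H.mapsTo (hsymm hx))
  pos := H.pos
  isPeriodicPt := by
    rintro _ ⟨x, hx, rfl⟩
    exact (isPeriodicPt_conj_iff φ H.mapsTo hφ hx).2 (H.isPeriodicPt x hx)

variable {E : Type*} [NormedAddCommGroup E] [NormedSpace ℝ E] [FiniteDimensional ℝ E]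

theorem PeriodicOn.exists_invariant_perturbation {h : E → E} {V : Set E} (H : PeriodicOn h V p)
    (hfree : ∀ x ∈ V, minimalPeriod h x = p) {F : E → E} (hF : ContinuousOn F V)
    (hFh : ∀ x ∈ V, F (h x) = F x) {K : Set E} (hK : IsCompact K) (hKV : K ⊆ V) {ε : ℝ}
    (hε : 0 < ε) :
    ∃ θ : E → E, Continuous θ ∧ (∀ x ∈ V, θ (h x) = θ x) ∧ (∀ x, ‖θ x‖ ≤ ε) ∧
      (∀ x ∉ V, θ x = 0) ∧ ∃ O ⊆ V, IsOpen O ∧ IsSlice h p O ∧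
        ∀ x ∈ K, F x + θ x = 0 → x ∈ orbitSaturation h O := by
  have := H.isOpen.locallyCompactSpace
  set k : V → V := H.mapsTo.restrict h V V
  have hk_iterate (i : ℕ) (x : V) : ((k^[i] x : V) : E) = h^[i] x :=
    H.mapsTo.coe_iterate_restrict x i
  have hk_free (x : V) : minimalPeriod k x = p := by
    rw [← hfree x x.2, minimalPeriod_eq_minimalPeriod_iff]
    intro i
    rw [IsPeriodicPt, IsFixedPt, Subtype.ext_iff, hk_iterate]
    rfl
  obtain ⟨θ, hθ, hθk, hθε, hθsupp, O, hO, hslice, hcover⟩ :=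
    Newman.exists_invariant_perturbation continuous_subtype_val Subtype.val_injective
      (H.continuousOn.mapsToRestrict H.mapsTo) H.pos hk_free hF.domRestrict
      (fun x => hFh x x.2) (Topology.IsInducing.subtypeVal.isCompact_preimage_iff
        (by rwa [Subtype.range_coe]) |>.2 hK) hε
  have hθ_coe (x : V) : Subtype.val.extend θ 0 (x : E) = θ x :=
    Subtype.val_injective.extend_apply ..
  have hθ_notMem (x : E) (hx : x ∉ V) : Subtype.val.extend θ 0 x = 0 :=
    extend_apply' _ _ _ fun ⟨y, hy⟩ => hx (hy ▸ y.2)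
  refine ⟨Subtype.val.extend θ 0, hθsupp.continuous_extend_zero H.isOpen hθ, fun x hx => ?_,
    fun x => ?_, hθ_notMem, Subtype.val '' O, by simp, H.isOpen.isOpenMap_subtype_val _ hO,
    ?_, fun x hxK hx => ?_⟩
  · exact (hθ_coe (k ⟨x, hx⟩)).trans ((hθk ⟨x, hx⟩).trans (hθ_coe ⟨x, hx⟩).symm)
  · by_cases hx : x ∈ V
    · exact (congrArg norm (hθ_coe ⟨x, hx⟩)).trans_le (hθε _)
    · rw [hθ_notMem x hx, norm_zero]
      exact hε.le
  · rintro _ ⟨x, hx, rfl⟩ i ⟨y, hy, hyx⟩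
    exact hslice x hx i (Subtype.ext (hyx.trans (hk_iterate i x).symm) ▸ hy)
  · obtain ⟨i, hi⟩ := hcover ⟨x, hKV hxK⟩ hxK (by rwa [← hθ_coe])
    exact ⟨i, _, hi, hk_iterate i _⟩

end PeriodicOn

section DegreeOfInvariantMaps

open Function Set Filter Metric

lemma PeriodicOn.exists_isCompact_isSlice {X : Type*} [TopologicalSpace X] [LocallyCompactSpace X]
    [T2Space X] {h : X → X} {p : ℕ} {V Z O W : Set X} (H : PeriodicOn h V p) (hZ : IsCompact Z)
    (hZV : Z ⊆ V) (hZh : MapsTo h Z Z) (hO : IsOpen O) (hslice : IsSlice h p O)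
    (hcover : Z ⊆ orbitSaturation h O) (hW : IsOpen W) (hZW : Z ⊆ W) :
    ∃ A ⊆ W, IsCompact A ∧ IsSlice h p A ∧ (∀ x ∈ Z, x ∈ A → x ∈ interior A) ∧
      ∀ x ∈ Z, ∃ i ∈ Finset.range p, h^[i] x ∈ A := by
  have hZO : IsCompact (Z ∩ O) :=
    hslice.isCompact_inter H.isOpen H.continuousOn_iterate H.pos hZ hZV
      (fun x hx => H.isPeriodicPt x (hZV hx)) hO hcover
  obtain ⟨A, hA, hZA, hAO⟩ := exists_compact_between hZO (hO.inter hW)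
    fun x hx => ⟨hx.2, hZW hx.1⟩
  refine ⟨A, fun x hx => (hAO hx).2, hA, hslice.mono fun x hx => (hAO hx).1,
    fun x hx hxA => hZA ⟨hx, (hAO hxA).1⟩, fun x hx => ?_⟩
  obtain ⟨i, hi⟩ := hcover hx
  rw [← (H.isPeriodicPt x (hZV hx)).iterate_mod_apply] at hi
  exact ⟨i % p, Finset.mem_range.2 (Nat.mod_lt i H.pos),
    interior_subset (hZA ⟨hZh.iterate _ hx, hi⟩)⟩

variable {m p : ℕ} {h f : (Fin (m + 1) → ℝ) → Fin (m + 1) → ℝ} {V O : Set (Fin (m + 1) → ℝ)}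
  {q : Fin (m + 1) → ℝ}

lemma PeriodicOn.eq_one_of_isSlice {A B : Set (Fin (m + 1) → ℝ)} (H : PeriodicOn h V p)
    (hB : IsCompact B) (hBV : B ⊆ V) (hA : IsCompact A) (hAB : A ⊆ B) (hslice : IsSlice h p A)
    (hf : ContinuousOn f V) (hfh : ∀ x ∈ V, f (h x) = f x) (hq : q ∈ interior B)
    (hline_f : ∀ x ∈ B, ∀ t : unitInterval, AffineMap.lineMap x (f x) (t : ℝ) = q →
      x ∈ interior B)
    (hline_h : ∀ i, ∀ x ∈ B, ∀ t : unitInterval, AffineMap.lineMap x (h^[i] x) (t : ℝ) ∈ A →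
      f (AffineMap.lineMap x (h^[i] x) (t : ℝ)) = q →
        x ∈ interior B ∧ AffineMap.lineMap x (h^[i] x) (t : ℝ) ∈ interior A)
    (hzero : ∀ x ∈ B, f x = q → ∃ i ∈ Finset.range p, h^[i] x ∈ A) : p = 1 := by
  have hone : ∀ᶠ N : ℕ in atTop, labelDegree N B (fun x => f x - q) = 1 :=
    eventually_labelDegree_sub_eq_one_of_lineMap hB (hf.mono hBV) hq hline_f
  have hmul : ∀ᶠ N : ℕ in atTop, labelDegree N B (fun x => f x - q) =
      (Finset.range p).card * labelDegree N A (fun x => f x - q) := by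
    refine eventually_labelDegree_eq_card_mul (φ := fun i => h^[i]) hA hB hAB
      (ContinuousOn.sub (g := fun _ => q) (hf.mono hBV) continuousOn_const)
      (fun i _ => (H.continuousOn_iterate i).mono hBV) (fun i _ x hx => ?_)
      (fun x _ i hi j hj hxi hxj => hslice.eq_of_iterate_mem (Finset.mem_range.1 hi)
        (Finset.mem_range.1 hj) hxi hxj)
      (fun i _ x hx t hyA hyq => hline_h i x hx t hyA (sub_eq_zero.1 hyq))
      (fun x hx hxq => hzero x hx (sub_eq_zero.1 hxq))
    exact congrArg (· - q) (H.apply_iterate_eq hfh i (hBV hx))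
  obtain ⟨N, h1, h2⟩ := (hone.and hmul).exists
  rw [h1, Finset.card_range] at h2
  exact_mod_cast Int.eq_one_of_dvd_one (Int.natCast_nonneg p) ⟨_, h2⟩

lemma PeriodicOn.norm_lt_of_lineMap_iterate_lt {E : Type*} [NormedAddCommGroup E]
    [NormedSpace ℝ E] {h : E → E} {V : Set E} (H : PeriodicOn h V p) {ℓ : E →L[ℝ] ℝ} {ρ δ : ℝ}
    (hnorm : ∀ x ∈ V, h x ≠ x → ℓ x < δ → ∀ i, ‖h^[i] x‖ < ρ) {x : E} (hxV : x ∈ V)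
    (hx : h x ≠ x) {i : ℕ} {t : ℝ} (ht : t ∈ Icc 0 1)
    (hlt : ℓ (AffineMap.lineMap x (h^[i] x) t) < δ) : ‖x‖ < ρ := by
  by_cases hℓx : ℓ x < δ
  · exact hnorm x hxV hx hℓx 0
  have hℓhx : ℓ (h^[i] x) < δ := by
    by_contra hℓhx
    have hconvex : Convex ℝ {y | δ ≤ ℓ y} := convex_halfSpace_ge ℓ.isLinear δ
    exact hlt.not_ge (hconvex.lineMap_mem (not_lt.1 hℓx) (not_lt.1 hℓhx) ht)
  have hhx := H.nonfixed.mapsTo_iterate i ⟨hxV, hx⟩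
  obtain ⟨k, hk⟩ := exists_iterate_iterate_eq H.pos (H.isPeriodicPt x hxV) i
  exact hk ▸ hnorm _ hhx.1 hhx.2 hℓhx k

lemma PeriodicOn.eq_one_of_zeros_subset_orbitSaturation (H : PeriodicOn h V p)
    {ℓ : (Fin (m + 1) → ℝ) →L[ℝ] ℝ} {ρ δ : ℝ} (hρV : closedBall 0 ρ ⊆ V)
    (hnorm : ∀ x ∈ V, h x ≠ x → ℓ x < δ → ∀ i, ‖h^[i] x‖ < ρ) (hf : ContinuousOn f V)
    (hfh : ∀ x ∈ V, f (h x) = f x) (hfix : ∀ x ∈ V, h x = x → f x = x)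
    (hqV : q ∈ V) (hq : h q ≠ q)
    (hline : ∀ x ∈ V, h x ≠ x → ∀ t : unitInterval, AffineMap.lineMap x (f x) (t : ℝ) = q →
      ℓ x < δ)
    (hO : IsOpen O) (hslice : IsSlice h p O)
    (hcover : ∀ x ∈ closedBall 0 ρ, f x = q → x ∈ orbitSaturation h O) : p = 1 := by
  have hB : IsCompact (closedBall (0 : Fin (m + 1) → ℝ) ρ) := isCompact_closedBall 0 ρ
  have hinterior {x : Fin (m + 1) → ℝ} (hx : ‖x‖ < ρ) : x ∈ interior (closedBall 0 ρ) :=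
    ball_subset_interior_closedBall (mem_ball_zero_iff.2 hx)
  have hline' {x : Fin (m + 1) → ℝ} (hx : x ∈ V) (t : unitInterval)
      (hxq : AffineMap.lineMap x (f x) (t : ℝ) = q) : h x ≠ x ∧ ℓ x < δ := by
    suffices hne : h x ≠ x from ⟨hne, hline x hx hne t hxq⟩
    intro hhx
    rw [hfix x hx hhx, AffineMap.lineMap_same, AffineMap.const_apply] at hxq
    exact hq (hxq ▸ hhx)
  have hzero {x : Fin (m + 1) → ℝ} (hx : x ∈ V) (hxq : f x = q) : h x ≠ x ∧ ℓ x < δ :=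
    hline' hx 1 (by simpa using hxq)
  set Z : Set (Fin (m + 1) → ℝ) := {x ∈ closedBall 0 ρ | f x = q}
  have hZ : IsCompact Z :=
    hB.of_isClosed_subset ((hf.mono hρV).preimage_isClosed_of_isClosed hB.isClosed
      (isClosed_singleton (x := q))) inter_subset_left
  have hZball : ∀ x ∈ Z, ∀ i, ‖h^[i] x‖ < ρ := fun x hx =>
    hnorm x (hρV hx.1) (hzero (hρV hx.1) hx.2).1 (hzero (hρV hx.1) hx.2).2
  obtain ⟨A, hAW, hA, hAslice, hAint, hAcover⟩ := H.exists_isCompact_isSlice (W := ball 0 ρ ∩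
      {x | ℓ x < δ}) hZ (fun x hx => hρV hx.1) (fun x hx => ⟨mem_closedBall_zero_iff.2
      (hZball x hx 1).le, (hfh x (hρV hx.1)).trans hx.2⟩) hO hslice
    (fun x hx => hcover x hx.1 hx.2) (isOpen_ball.inter (isOpen_lt ℓ.continuous continuous_const))
    fun x hx => ⟨mem_ball_zero_iff.2 (hZball x hx 0), (hzero (hρV hx.1) hx.2).2⟩
  have hAB : A ⊆ closedBall 0 ρ := fun x hx => ball_subset_closedBall (hAW hx).1
  refine H.eq_one_of_isSlice (q := q) hB hρV hA hAB hAslice hf hfh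
    (hinterior (hnorm q hqV hq (hline q hqV hq 0 (by simp)) 0))
    (fun x hx t hxq => hinterior (hnorm x (hρV hx) (hline' (hρV hx) t hxq).1
      (hline' (hρV hx) t hxq).2 0)) (fun i x hx t hyA hyq => ?_) fun x hx hxq => hAcover x ⟨hx, hxq⟩
  refine ⟨hinterior ?_, hAint _ ⟨hAB hyA, hyq⟩ hyA⟩
  have hxV := hρV hx
  have hx_ne : h x ≠ x := fun hhx => by
    rw [iterate_fixed hhx, AffineMap.lineMap_same, AffineMap.const_apply, hfix x hxV hhx] at hyq
    exact hq (hyq ▸ hhx)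
  exact H.norm_lt_of_lineMap_iterate_lt hnorm hxV hx_ne t.2 (hAW hyA).2

end DegreeOfInvariantMaps

section Paraboloid

open Function Set Filter Metric

variable {E : Type*} [NormedAddCommGroup E] [NormedSpace ℝ E] {h : E → E} {V : Set E} {p : ℕ}
  {ℓ : E →L[ℝ] ℝ}

lemma PeriodicOn.birkhoffAverage_id_apply (H : PeriodicOn h V p) {x : E} (hx : x ∈ V) :
    birkhoffAverage ℝ h id p (h x) = birkhoffAverage ℝ h id p x := by
  rw [← sub_eq_zero, birkhoffAverage_apply_sub_birkhoffAverage, (H.isPeriodicPt x hx).eq, sub_self,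
    smul_zero]

lemma PeriodicOn.birkhoffAverage_id_eq (H : PeriodicOn h V p) {x : E} (hx : h x = x) :
    birkhoffAverage ℝ h id p x = x :=
  IsFixedPt.birkhoffAverage_eq ℝ hx id (Nat.cast_ne_zero.2 H.pos.ne')

lemma PeriodicOn.continuousOn_birkhoffAverage_id (H : PeriodicOn h V p) :
    ContinuousOn (birkhoffAverage ℝ h id p) V :=
  (continuousOn_finsetSum _ fun i _ => H.continuousOn_iterate i).const_smul (p : ℝ)⁻¹

lemma le_mul_map_birkhoffAverage_id (hp : 0 < p) {x : E} (hx : ∀ i, 0 ≤ ℓ (h^[i] x)) :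
    ℓ x ≤ p * ℓ (birkhoffAverage ℝ h id p x) := by
  have hp0 : (p : ℝ) ≠ 0 := by exact_mod_cast hp.ne'
  rw [birkhoffAverage, map_smul, smul_eq_mul, mul_inv_cancel_left₀ hp0, birkhoffSum, map_sum]
  exact Finset.single_le_sum (f := fun i => ℓ (h^[i] x)) (fun i _ => hx i) (Finset.mem_range.2 hp)

lemma le_mul_of_lineMap_add_eq {p : ℝ} (hp : 1 ≤ p) {x y v q : E} (hx : 0 ≤ ℓ x)
    (hxy : ℓ x ≤ p * ℓ y) {t : ℝ} (ht : t ∈ Icc 0 1)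
    (hq : AffineMap.lineMap x (y + v) t = q) : ℓ x ≤ p * (ℓ q + |ℓ v|) := by
  have hp0 : 0 ≤ p := zero_le_one.trans hp
  have hv : 0 ≤ t * ℓ v + |ℓ v| := by
    have := mul_le_of_le_one_left (abs_nonneg (ℓ v)) ht.2
    have := mul_le_mul_of_nonneg_left (neg_abs_le (ℓ v)) ht.1
    linarith
  calc ℓ x = (1 - t) * ℓ x + t * ℓ x := by ring
    _ ≤ (1 - t) * (p * ℓ x) + t * (p * ℓ y) := by
      gcongr
      · exact sub_nonneg.2 ht.2
      · exact le_mul_of_one_le_left hx hp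
      · exact ht.1
    _ ≤ (1 - t) * (p * ℓ x) + t * (p * ℓ y) + p * (t * ℓ v + |ℓ v|) :=
      le_add_of_nonneg_right (mul_nonneg hp0 hv)
    _ = p * (ℓ q + |ℓ v|) := by
      rw [← hq, AffineMap.lineMap_apply_module, map_add, map_smul, map_smul, map_add]
      simp only [smul_eq_mul]
      ring

lemma PeriodicOn.exists_forall_norm_iterate_lt (H : PeriodicOn h V p) (h0V : 0 ∈ V) (h0 : h 0 = 0)
    {c : ℝ} (hc : 0 < c) (hℓ : ∀ x ∈ V, h x ≠ x → c * ‖x‖ ^ 2 ≤ ℓ x) {ρ : ℝ} (hρ : 0 < ρ) :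
    ∃ δ > 0, ∀ x ∈ V, h x ≠ x → ℓ x < δ → ∀ i, ‖h^[i] x‖ < ρ := by
  have hsmall : ∀ᶠ x in nhds (0 : E), ∀ i ∈ Finset.range p, ‖h^[i] x‖ < ρ := by
    refine (eventually_all_finset _).2 fun i _ => ?_
    refine ((H.continuousOn_iterate i).continuousAt (H.isOpen.mem_nhds h0V)).norm.eventually_lt
      continuousAt_const ?_
    rwa [iterate_fixed h0, norm_zero]
  obtain ⟨r, hr, hball⟩ := Metric.eventually_nhds_iff_ball.1 hsmall
  refine ⟨c * r ^ 2, by positivity, fun x hx hne hlt i => ?_⟩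
  have hxr : ‖x‖ < r := lt_of_pow_lt_pow_left₀ 2 hr.le
    (lt_of_mul_lt_mul_left ((hℓ x hx hne).trans_lt hlt) hc.le)
  rw [← (H.isPeriodicPt x hx).iterate_mod_apply]
  exact hball x (mem_ball_zero_iff.2 hxr) _ (Finset.mem_range.2 (Nat.mod_lt i H.pos))

lemma PeriodicOn.exists_closedBall_nonfixed (H : PeriodicOn h V p) (h0V : 0 ∈ V)
    (h0 : 0 ∉ interior (fixedPoints h)) {δ : ℝ} (hδ : 0 < δ) :
    ∃ q ∈ V, h q ≠ q ∧ ∃ ε > 0, ∀ v ∈ closedBall (0 : E) ε,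
      h (q + v) ≠ q + v ∧ p * (ℓ q + |ℓ v|) < δ := by
  obtain ⟨q, hq, hqV, hqδ⟩ : ∃ q, h q ≠ q ∧ q ∈ V ∧ p * ℓ q < δ := by
    have hlt : ∀ᶠ x in nhds (0 : E), p * ℓ x < δ :=
      ContinuousAt.eventually_lt (by fun_prop) continuousAt_const (by simpa using hδ)
    rw [mem_interior_iff_mem_nhds] at h0
    have hfrequently : ∃ᶠ x in nhds 0, h x ≠ x := not_eventually.1 h0
    exact (hfrequently.and_eventually ((H.isOpen.eventually_mem h0V).and hlt)).exists
  have hne : ∀ᶠ v in nhds (0 : E), q + v ∈ {x ∈ V | h x ≠ x} :=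
    (continuous_const_add q).continuousAt.eventually_mem
      (H.isOpen_nonfixed.mem_nhds ⟨by simpa using hqV, by simpa using hq⟩)
  have hlt : ∀ᶠ v in nhds (0 : E), p * (ℓ q + |ℓ v|) < δ :=
    ContinuousAt.eventually_lt (by fun_prop) continuousAt_const (by simpa using hqδ)
  obtain ⟨ε, hε, hsub⟩ := nhds_basis_closedBall.eventually_iff.1 (hne.and hlt)
  exact ⟨q, hqV, hq, ε, hε, fun v hv => ⟨(hsub hv).1.2, (hsub hv).2⟩⟩

lemma PeriodicOn.exists_perturbation_average [FiniteDimensional ℝ E] (H : PeriodicOn h V p)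
    (hfree : ∀ x ∈ V, h x ≠ x → minimalPeriod h x = p) {ρ ε : ℝ} (hρV : closedBall 0 ρ ⊆ V)
    {q : E} (hε : 0 < ε) (hεV : ∀ x ∈ closedBall q ε, h x ≠ x) :
    ∃ θ : E → E, Continuous θ ∧ (∀ x ∈ V, θ (h x) = θ x) ∧ (∀ x, ‖θ x‖ ≤ ε) ∧
      (∀ x, h x = x → θ x = 0) ∧ ∃ O, IsOpen O ∧ IsSlice h p O ∧
        ∀ x ∈ closedBall 0 ρ, birkhoffAverage ℝ h id p x + θ x = q → x ∈ orbitSaturation h O := by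
  have hf := H.continuousOn_birkhoffAverage_id
  set K : Set E := {x ∈ closedBall 0 ρ | birkhoffAverage ℝ h id p x ∈ closedBall q ε}
  have := FiniteDimensional.proper_real E
  have hK : IsCompact K := (isCompact_closedBall (0 : E) ρ).of_isClosed_subset
    ((hf.mono hρV).preimage_isClosed_of_isClosed isClosed_closedBall isClosed_closedBall)
    inter_subset_left
  have hKV : K ⊆ {x ∈ V | h x ≠ x} := fun x hx => ⟨hρV hx.1, fun hhx => hεV x (by
    have hmem := hx.2
    rwa [H.birkhoffAverage_id_eq hhx] at hmem) hhx⟩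
  obtain ⟨θ, hθ, hθh, hθε, hθ0, O, -, hO, hslice, hcover⟩ :=
    H.nonfixed.exists_invariant_perturbation (fun x hx => hfree x hx.1 hx.2)
      (F := fun x => birkhoffAverage ℝ h id p x - q)
      ((hf.mono fun x hx => hx.1).sub continuousOn_const)
      (fun x hx => by rw [H.birkhoffAverage_id_apply hx.1]) hK hKV hε
  refine ⟨θ, hθ, fun x hx => ?_, hθε, fun x hx => hθ0 x fun hmem => hmem.2 hx, O, hO, hslice,
    fun x hx hxq => hcover x ⟨hx, ?_⟩ (by rw [← hxq]; abel)⟩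
  · by_cases hhx : h x = x
    · rw [hhx]
    · exact hθh x ⟨hx, hhx⟩
  · rw [mem_closedBall_iff_norm, ← hxq, sub_add_cancel_left, norm_neg]
    exact hθε x

theorem PeriodicOn.zero_mem_interior_fixedPoints {m : ℕ}
    {h : (Fin (m + 1) → ℝ) → Fin (m + 1) → ℝ} {V : Set (Fin (m + 1) → ℝ)}
    {ℓ : (Fin (m + 1) → ℝ) →L[ℝ] ℝ} (H : PeriodicOn h V p)
    (hfree : ∀ x ∈ V, h x ≠ x → minimalPeriod h x = p) (h0V : 0 ∈ V) (h0 : h 0 = 0) {c : ℝ}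
    (hc : 0 < c) (hℓ : ∀ x ∈ V, h x ≠ x → c * ‖x‖ ^ 2 ≤ ℓ x) :
    0 ∈ interior (fixedPoints h) := by
  by_contra hinterior
  have hℓ_nonneg (x) (hxV : x ∈ V) (hx : h x ≠ x) (i : ℕ) : 0 ≤ ℓ (h^[i] x) := by
    have hhx := H.nonfixed.mapsTo_iterate i ⟨hxV, hx⟩
    exact (by positivity : 0 ≤ c * ‖h^[i] x‖ ^ 2).trans (hℓ _ hhx.1 hhx.2)
  have hp : (1 : ℝ) ≤ p := by exact_mod_cast H.pos
  obtain ⟨ρ, hρ, hρV⟩ := nhds_basis_closedBall.mem_iff.1 (H.isOpen.mem_nhds h0V)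
  obtain ⟨δ, hδ, hnorm⟩ := H.exists_forall_norm_iterate_lt h0V h0 hc hℓ hρ
  obtain ⟨q, hqV, hq, ε, hε, hεsub⟩ := H.exists_closedBall_nonfixed (ℓ := ℓ) h0V hinterior hδ
  obtain ⟨θ, hθ, hθh, hθε, hθ0, O, hO, hslice, hcover⟩ :=
    H.exists_perturbation_average hfree hρV hε (q := q) fun x hx => by
      simpa using (hεsub (x - q) (by rwa [mem_closedBall_zero_iff, ← mem_closedBall_iff_norm])).1
  have hp1 : p = 1 := by
    refine H.eq_one_of_zeros_subset_orbitSaturation (q := q)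
      (f := fun x => birkhoffAverage ℝ h id p x + θ x) hρV hnorm ?_ (fun x hx => ?_)
      (fun x _ hx => ?_) hqV hq (fun x hxV hx t hxq => ?_) hO hslice hcover
    · exact H.continuousOn_birkhoffAverage_id.add hθ.continuousOn
    · rw [H.birkhoffAverage_id_apply hx, hθh x hx]
    · rw [H.birkhoffAverage_id_eq hx, hθ0 x hx, add_zero]
    · refine (le_mul_of_lineMap_add_eq hp (hℓ_nonneg x hxV hx 0)
        (le_mul_map_birkhoffAverage_id H.pos (hℓ_nonneg x hxV hx)) t.2 hxq).trans_lt ?_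
      exact (hεsub _ (mem_closedBall_zero_iff.2 (hθε x))).2
  exact hq (minimalPeriod_eq_one_iff_isFixedPt.1 ((hfree q hqV hq).trans hp1))

end Paraboloid

section Inversion

open Function Set Filter Metric EuclideanGeometry

lemma exists_ball_subset_of_mem_closure {α : Type*} [MetricSpace α] [ProperSpace α] {U V : Set α}
    (hU : IsOpen U) {x : α} (hx : x ∈ closure U) (hxU : x ∉ U) (hV : V ∈ nhds x) :
    ∃ y ∈ U ∩ V, ∃ z ∈ V \ U, ball y (dist z y) ⊆ U := by
  obtain ⟨R, hR, hRV⟩ := Metric.mem_nhds_iff.1 hV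
  obtain ⟨y, hyU, hyx⟩ := Metric.mem_closure_iff.1 hx (R / 2) (half_pos hR)
  obtain ⟨z, hz, hzy⟩ := hU.isClosed_compl.exists_infDist_eq_dist ⟨x, hxU⟩ y
  rw [dist_comm y z] at hzy
  have hzx : dist z y ≤ dist x y := by
    rw [← hzy, dist_comm x y]
    exact infDist_le_dist_of_mem hxU
  refine ⟨y, ⟨hyU, hRV ?_⟩, z, ⟨hRV ?_, hz⟩, fun w hw => ?_⟩
  · rw [mem_ball, dist_comm]
    linarith
  · have := dist_triangle_right z x y
    rw [mem_ball]
    linarith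
  · by_contra hwU
    rw [mem_ball, dist_comm, ← hzy] at hw
    exact hw.not_ge (infDist_le_dist_of_mem hwU)

section InnerProductSpace

variable {P : Type*} [NormedAddCommGroup P] [InnerProductSpace ℝ P]

/-- The inversion in the sphere of centre `c` and radius `R`, as a self-homeomorphism of the
complement of `c`. -/
noncomputable def inversionHomeomorph (c : P) {R : ℝ} (hR : R ≠ 0) : OpenPartialHomeomorph P P where
  toFun := inversion c R
  invFun := inversion c R
  source := {c}ᶜ
  target := {c}ᶜ
  map_source' _ hx := mt (inversion_eq_center hR).1 hx
  map_target' _ hx := mt (inversion_eq_center hR).1 hx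
  left_inv' x _ := inversion_inversion c hR x
  right_inv' x _ := inversion_inversion c hR x
  open_source := isOpen_compl_singleton
  open_target := isOpen_compl_singleton
  continuousOn_toFun :=
    continuousOn_const.inversion continuousOn_const continuousOn_id fun _ hx => hx
  continuousOn_invFun :=
    continuousOn_const.inversion continuousOn_const continuousOn_id fun _ hx => hx

/-- Inversion maps the complement of the open ball into the closed ball, which lies in the
paraboloid-shaped set below. -/
lemma norm_inversion_sub_sq_le {x y z : P} (hzy : z ≠ y) (hx : dist z y ≤ dist x y) :
    ‖inversion y (dist z y) x - z‖ ^ 2 ≤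
      -2 * inner ℝ (z - y) (inversion y (dist z y) x - z) := by
  have hr : 0 < dist z y := dist_pos.2 hzy
  have hdist : dist (inversion y (dist z y) x) y ≤ dist z y := by
    rw [dist_inversion_center, div_le_iff₀ (hr.trans_le hx), sq]
    gcongr
  have hnorm : ‖(inversion y (dist z y) x - z) + (z - y)‖ ^ 2 ≤ ‖z - y‖ ^ 2 := by
    rw [sub_add_sub_cancel, ← dist_eq_norm, ← dist_eq_norm]
    gcongr
  rw [norm_add_sq_real, real_inner_comm] at hnorm
  linarith

end InnerProductSpace

section EuclideanSpace

variable {m n p : ℕ}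

lemma PeriodicOn.mem_interior_fixedPoints_of_paraboloid {X : Type*} [TopologicalSpace X]
    {h : X → X} {V : Set X} (H : PeriodicOn h V p)
    (hfree : ∀ x ∈ V, h x ≠ x → minimalPeriod h x = p)
    (φ : OpenPartialHomeomorph X (Fin (m + 1) → ℝ)) (hφ : V ⊆ φ.source) {z : X} (hzV : z ∈ V)
    (hz : h z = z) (hφz : φ z = 0) {ℓ : (Fin (m + 1) → ℝ) →L[ℝ] ℝ} {c : ℝ} (hc : 0 < c)
    (hℓ : ∀ x ∈ V, h x ≠ x → c * ‖φ x‖ ^ 2 ≤ ℓ (φ x)) : z ∈ interior (fixedPoints h) := by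
  have hfixed_iff {x : X} (hx : x ∈ V) : (φ ∘ h ∘ φ.symm) (φ x) = φ x ↔ h x = x :=
    isPeriodicPt_conj_iff (i := 1) φ H.mapsTo hφ hx
  rw [← mem_interior_fixedPoints_conj_iff φ H.isOpen H.mapsTo hφ hzV, hφz]
  refine (H.conj φ hφ).zero_mem_interior_fixedPoints ?_ ⟨z, hzV, hφz⟩
    (hφz ▸ (hfixed_iff hzV).2 hz) hc (ℓ := ℓ) ?_
  · rintro _ ⟨x, hx, rfl⟩ hne
    rw [← hfree x hx (mt (hfixed_iff hx).2 hne), minimalPeriod_eq_minimalPeriod_iff]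
    exact fun i => isPeriodicPt_conj_iff φ H.mapsTo hφ hx
  · rintro _ ⟨x, hx, rfl⟩ hne
    exact hℓ x hx (mt (hfixed_iff hx).2 hne)

lemma PeriodicOn.mem_interior_fixedPoints_of_ball_subset
    {h : EuclideanSpace ℝ (Fin (m + 1)) → EuclideanSpace ℝ (Fin (m + 1))}
    {V : Set (EuclideanSpace ℝ (Fin (m + 1)))} (H : PeriodicOn h V p)
    (hfree : ∀ x ∈ V, h x ≠ x → minimalPeriod h x = p) {y z : EuclideanSpace ℝ (Fin (m + 1))}
    (hy : h y = y) (hzV : z ∈ V) (hz : h z = z) (hzy : z ≠ y)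
    (hball : ball y (dist z y) ⊆ fixedPoints h) : z ∈ interior (fixedPoints h) := by
  let e := EuclideanSpace.equiv (Fin (m + 1)) ℝ
  let φ : OpenPartialHomeomorph (EuclideanSpace ℝ (Fin (m + 1))) (Fin (m + 1) → ℝ) :=
    (inversionHomeomorph y (dist_ne_zero.2 hzy)).transHomeomorph
      ((Homeomorph.subRight z).trans e.toHomeomorph)
  have hφ (x) : φ x = e (inversion y (dist z y) x - z) := rfl
  have hφz : φ z = 0 := by
    rw [hφ, inversion_of_mem_sphere (Metric.mem_sphere.2 rfl), sub_self, map_zero]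
  let ℓ : (Fin (m + 1) → ℝ) →L[ℝ] ℝ :=
    ((-2 : ℝ) • innerSL ℝ (z - y)).comp (e.symm : (Fin (m + 1) → ℝ) →L[ℝ] _)
  have hparaboloid (x) (hx : h x ≠ x) : 1 * ‖φ x‖ ^ 2 ≤ ℓ (φ x) := by
    have hxy : dist z y ≤ dist x y := not_lt.1 fun hlt => hx (hball hlt)
    calc 1 * ‖φ x‖ ^ 2 = ‖φ x‖ ^ 2 := one_mul _
      _ ≤ ‖inversion y (dist z y) x - z‖ ^ 2 := by
        gcongr
        exact (pi_norm_le_iff_of_nonneg (norm_nonneg _)).2 fun i =>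
          PiLp.norm_apply_le (inversion y (dist z y) x - z) i
      _ ≤ -2 * inner ℝ (z - y) (inversion y (dist z y) x - z) := norm_inversion_sub_sq_le hzy hxy
      _ = ℓ (φ x) := by simp [-map_sub, ℓ, hφ]
  exact (H.diff_singleton hy).mem_interior_fixedPoints_of_paraboloid (fun x hx => hfree x hx.1) φ
    (fun x hx => hx.2) ⟨hzV, hzy⟩ hz hφz one_pos fun x _ => hparaboloid x

lemma PeriodicOn.closure_inter_subset_interior_of_minimalPeriod_eq
    {h : EuclideanSpace ℝ (Fin n) → EuclideanSpace ℝ (Fin n)}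
    {V : Set (EuclideanSpace ℝ (Fin n))} (H : PeriodicOn h V p)
    (hfree : ∀ x ∈ V, h x ≠ x → minimalPeriod h x = p) :
    closure (interior (fixedPoints h)) ∩ V ⊆ interior (fixedPoints h) := by
  cases n with
  | zero => exact fun x _ => mem_interior_iff_mem_nhds.2 (univ_mem' fun _ => Subsingleton.elim _ _)
  | succ m =>
    rintro x ⟨hx, hxV⟩
    by_contra hx_interior
    obtain ⟨y, ⟨hy, -⟩, z, ⟨hzV, hz⟩, hball⟩ := exists_ball_subset_of_mem_closure isOpen_interior hx
      hx_interior (H.isOpen.mem_nhds hxV)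
    have hzy : z ≠ y := fun hzy => hz (hzy ▸ hy)
    have hball_fixed : ball y (dist z y) ⊆ fixedPoints h := hball.trans interior_subset
    have hzfix : h z = z := by
      refine H.isFixedPt_of_mem_closure hzV (closure_mono hball_fixed ?_)
      rw [closure_ball y (dist_ne_zero.2 hzy)]
      exact mem_closedBall.2 le_rfl
    have hyfix : h y = y := interior_subset (s := fixedPoints h) hy
    exact hz (H.mem_interior_fixedPoints_of_ball_subset hfree hyfix hzV hzfix hzy hball_fixed)

end EuclideanSpace

end Inversion

section NewmanProperty

open Function Set Topology

variable {X : Type*} [TopologicalSpace X] {h : X → X} {N : Set X} {k : ℕ} {z : X}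

lemma PeriodicOn.iterate {m : ℕ} (H : PeriodicOn h N (m * k)) : PeriodicOn h^[m] N k where
  isOpen := H.isOpen
  mapsTo := H.mapsTo_iterate m
  continuousOn := H.continuousOn_iterate m
  pos := Nat.pos_of_mul_pos_left H.pos
  isPeriodicPt x hx := by
    rw [IsPeriodicPt, ← iterate_mul]
    exact H.isPeriodicPt x hx

lemma exists_periodicOn_of_isFixedPt (hN : IsOpen N) (hm : MapsTo h N N) (hc : ContinuousOn h N)
    (hk : 0 < k) {S : Set X} (hS : IsOpen S) (hz : z ∈ N ∩ S) (hfix : IsFixedPt h z)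
    (hper : ∀ x ∈ N ∩ S, IsPeriodicPt h k x) : ∃ W ⊆ N ∩ S, z ∈ W ∧ PeriodicOn h W k := by
  set W : Set X := ⋂ i ∈ Finset.range k, N ∩ h^[i] ⁻¹' S
  have hmem (x : X) : x ∈ W ↔ ∀ i < k, x ∈ N ∧ h^[i] x ∈ S := by
    simp only [W, mem_iInter, Finset.mem_range, mem_inter_iff, mem_preimage]
  have hWNS : W ⊆ N ∩ S := fun x hx => (hmem x).1 hx 0 hk
  refine ⟨W, hWNS, (hmem z).2 fun i _ => ⟨hz.1, (hfix.iterate i).eq.symm ▸ hz.2⟩, ?_,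
    fun x hx => ?_, hc.mono fun x hx => (hWNS hx).1, hk, fun x hx => hper x (hWNS hx)⟩
  · exact isOpen_biInter_finset fun i _ => (hc.iterate hm i).isOpen_inter_preimage hN hS
  · refine (hmem _).2 fun i hi => ⟨hm (hWNS hx).1, ?_⟩
    rw [← iterate_succ_apply]
    rcases (Nat.succ_le_of_lt hi).lt_or_eq with hlt | heq
    · exact ((hmem x).1 hx _ hlt).2
    · rw [heq, (hper x (hWNS hx)).eq]
      exact (hWNS hx).2

/-- Newman's local property: a periodic continuous self-map of an open set which is the identity
on an open set is also the identity near every point of its closure. Newman's theorem says that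
manifolds have this property. -/
def NewmanProperty (X : Type*) [TopologicalSpace X] : Prop :=
  ∀ ⦃h : X → X⦄ ⦃N : Set X⦄ ⦃k : ℕ⦄, PeriodicOn h N k →
    closure (interior (fixedPoints h)) ∩ N ⊆ interior (fixedPoints h)

lemma NewmanProperty.subset_fixedPoints (hX : NewmanProperty X) (H : PeriodicOn h N k)
    (hN : IsPreconnected N) (hne : (N ∩ interior (fixedPoints h)).Nonempty) : N ⊆ fixedPoints h :=
  (hN.subset_of_closure_inter_subset isOpen_interior hne (hX H)).trans interior_subset

lemma NewmanProperty.mem_interior_fixedPoints [T2Space X] (hX : NewmanProperty X)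
    (hc : Continuous h) (hk : 0 < k) (hper : z ∈ interior (fixedPoints h^[k]))
    (hz : z ∈ closure (interior (fixedPoints h))) : z ∈ interior (fixedPoints h) := by
  have hfix : IsFixedPt h z :=
    closure_minimal interior_subset (isClosed_fixedPoints hc) hz
  obtain ⟨W, -, hzW, H⟩ := exists_periodicOn_of_isFixedPt isOpen_univ (mapsTo_univ _ _)
    hc.continuousOn hk isOpen_interior ⟨mem_univ z, hper⟩ hfix
    fun x hx => (interior_subset hx.2 : _ ∈ fixedPoints _)
  exact hX H ⟨hz, hzW⟩

theorem newmanProperty_euclideanSpace (n : ℕ) : NewmanProperty (EuclideanSpace ℝ (Fin n)) := by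
  intro h N k H z ⟨hz, hzN⟩
  induction k using Nat.strong_induction_on generalizing h N with
  | _ k ih =>
  rcases eq_or_ne k 1 with rfl | hk
  · exact interior_maximal H.isPeriodicPt H.isOpen hzN
  obtain ⟨p, hp, k', rfl⟩ := Nat.exists_prime_and_dvd hk
  have hfix : IsFixedPt h z := H.isFixedPt_of_mem_closure hzN (closure_mono interior_subset hz)
  have hfix_iterate : z ∈ interior (fixedPoints h^[p]) :=
    ih k' (lt_mul_left H.iterate.pos hp.one_lt) H.iterate
      (closure_mono (interior_mono fun x hx => IsFixedPt.iterate hx p) hz) hzN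
  obtain ⟨W, -, hzW, HW⟩ := exists_periodicOn_of_isFixedPt H.isOpen H.mapsTo H.continuousOn hp.pos
    isOpen_interior ⟨hzN, hfix_iterate⟩ hfix fun x hx => (interior_subset hx.2 : _ ∈ fixedPoints _)
  have := Fact.mk hp
  exact HW.closure_inter_subset_interior_of_minimalPeriod_eq
    (fun x hx => minimalPeriod_eq_prime (HW.isPeriodicPt x hx)) ⟨hz, hzW⟩

theorem NewmanProperty.of_chartedSpace {E M : Type*} [TopologicalSpace E] [TopologicalSpace M]
    [T2Space M] [ChartedSpace E M] (hE : NewmanProperty E) : NewmanProperty M := by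
  intro h N k H z ⟨hz, hzN⟩
  set φ := chartAt E z
  have hfix : IsFixedPt h z := H.isFixedPt_of_mem_closure hzN (closure_mono interior_subset hz)
  obtain ⟨W, hW, hzW, HW⟩ := exists_periodicOn_of_isFixedPt H.isOpen H.mapsTo H.continuousOn H.pos
    φ.open_source ⟨hzN, mem_chart_source E z⟩ hfix fun x hx => H.isPeriodicPt x hx.1
  have hWφ : W ⊆ φ.source := fun x hx => (hW hx).2
  have hconj {x : M} (hx : x ∈ W) :
      φ x ∈ interior (fixedPoints (φ ∘ h ∘ φ.symm)) ↔ x ∈ interior (fixedPoints h) :=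
    mem_interior_fixedPoints_conj_iff φ HW.isOpen HW.mapsTo hWφ hx
  refine (hconj hzW).1 (hE (HW.conj φ hWφ) ⟨?_, mem_image_of_mem φ hzW⟩)
  rw [mem_closure_iff_frequently, ← φ.map_nhds_eq (hWφ hzW), Filter.frequently_map]
  refine ((mem_closure_iff_frequently.1 hz).and_eventually (HW.isOpen.mem_nhds hzW)).mono ?_
  exact fun x ⟨hx, hxW⟩ => (hconj hxW).2 hx

end NewmanProperty

section OrbitSpace

open Function Set Topology MulAction

lemma exists_isOpen_inter_subset_of_subset_iUnion {X ι : Type*} [TopologicalSpace X] [T2Space X]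
    [LocallyCompactSpace X] [Countable ι] {S : Set X} (hS : IsLocallyClosed S) (hne : S.Nonempty)
    {F : ι → Set X} (hF : ∀ i, IsClosed (F i)) (hSF : S ⊆ ⋃ i, F i) :
    ∃ i, ∃ U, IsOpen U ∧ (S ∩ U).Nonempty ∧ S ∩ U ⊆ F i := by
  have := hS.locallyCompactSpace
  have := hne.to_subtype
  obtain ⟨i, z, hz⟩ := nonempty_interior_of_iUnion_of_closed (X := S)
    (fun i => (hF i).preimage continuous_subtype_val)
    (by rwa [← preimage_iUnion, preimage_eq_univ_iff, Subtype.range_coe])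
  obtain ⟨_, hsub, ⟨U, hU, rfl⟩, hzU⟩ := mem_interior.1 hz
  exact ⟨i, U, hU, ⟨z, z.2, hzU⟩, fun x hx => hsub (a := ⟨x, hx.1⟩) hx.2⟩

lemma subset_interior_of_disjoint_frontier {X : Type*} [TopologicalSpace X] {T K : Set X}
    (hT : IsPreconnected T) (hTK : Disjoint T (frontier K)) (hne : (T ∩ K).Nonempty) :
    T ⊆ interior K := by
  have hsplit : ∀ x ∈ T, x ∈ interior K ∨ x ∉ closure K := fun x hx => by
    by_contra! hx'
    exact disjoint_left.1 hTK hx ⟨hx'.2, hx'.1⟩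
  obtain ⟨x, hxT, hxK⟩ := hne
  refine hT.subset_left_of_subset_union isOpen_interior isClosed_closure.isOpen_compl
    (disjoint_compl_right.mono_left (interior_subset.trans subset_closure)) hsplit
    ⟨x, hxT, (hsplit x hxT).resolve_right fun h => h (subset_closure hxK)⟩

lemma mem_periodicPts_of_mapsTo {α : Type*} {f : α → α} {s : Set α} (hs : s.Finite)
    (hf : InjOn f s) (hm : MapsTo f s s) {x : α} (hx : x ∈ s) : x ∈ periodicPts f := by
  have := hs.to_subtype
  obtain ⟨k, hk, hper⟩ := (hm.restrict_inj.2 hf).mem_periodicPts ⟨x, hx⟩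
  refine ⟨k, hk, ?_⟩
  rw [IsPeriodicPt, IsFixedPt, ← hm.coe_iterate_restrict ⟨x, hx⟩ k, hper.eq]

variable {G X : Type*} [Group G] [TopologicalSpace X] [MulAction G X]

variable (G) in
lemma discreteTopology_of_isPretransitive [ContinuousConstSMul G X] [IsPretransitive G X]
    [Countable X] [Nonempty X] [T1Space X] [BaireSpace X] : DiscreteTopology X := by
  obtain ⟨x, hx⟩ := nonempty_interior_of_iUnion_of_closed (X := X) (fun x => isClosed_singleton)
    (iUnion_of_singleton X)
  have hopen : IsOpen {x} := by
    rwa [← subset_interior_iff_isOpen, singleton_subset_iff, ← singleton_inter_nonempty,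
      inter_eq_right.2 interior_subset]
  refine discreteTopology_iff_isOpen_singleton.2 fun y => ?_
  obtain ⟨g, rfl⟩ := exists_smul_eq G x y
  rw [← smul_set_singleton]
  exact hopen.smul g

section T2Quotient

variable [T2Space (Quotient (orbitRel G X))]

variable (G) in
lemma isClosed_orbit (x : X) : IsClosed (orbit G x) := by
  have : IsClosed (Quotient.mk (orbitRel G X) ⁻¹' {Quotient.mk (orbitRel G X) x}) :=
    isClosed_singleton.preimage continuous_quotient_mk'
  convert this using 1
  ext y
  exact (Quotient.eq (r := orbitRel G X)).symm

lemma isOpen_setOf_forall_smul_notMem {C : Set X} (hC : IsCompact C) :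
    IsOpen {a : X | ∀ g : G, g • a ∉ C} := by
  have hπ : Continuous (Quotient.mk (orbitRel G X)) := continuous_quotient_mk'
  convert (hC.image hπ).isClosed.isOpen_compl.preimage hπ using 1
  ext a
  simp only [mem_ofPred_eq, mem_preimage, mem_compl_iff, mem_image, Quotient.eq, orbitRel_apply,
    mem_orbit_iff, not_exists, not_and]
  exact ⟨fun h c hc g hg => h g (hg ▸ hc), fun h g hg => h _ hg g rfl⟩

variable [ContinuousConstSMul G X] [Countable G] [T2Space X] [LocallyCompactSpace X]

variable (G) in
lemma isDiscrete_orbit (x : X) : IsDiscrete (orbit G x) := by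
  have := (isClosed_orbit G x).isLocallyClosed.locallyCompactSpace
  have : Countable (orbit G x) := (countable_range _).to_subtype
  have : Nonempty (orbit G x) := ⟨x, mem_orbit_self x⟩
  have : ContinuousConstSMul G (orbit G x) := IsInducing.subtypeVal.continuousConstSMul id rfl
  exact ⟨discreteTopology_of_isPretransitive G⟩

lemma finite_orbit_inter (x : X) {C : Set X} (hC : IsCompact C) : (orbit G x ∩ C).Finite :=
  (hC.inter_left (isClosed_orbit G x)).finite ((isDiscrete_orbit G x).mono inter_subset_left)

variable [LocallyConnectedSpace X]

variable (G) in
lemma exists_isOpen_isPreconnected_smul_mem_iff {x : X} {W : Set X} (hW : W ∈ 𝓝 x) :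
    ∃ V C : Set X, IsOpen V ∧ IsPreconnected V ∧ x ∈ V ∧ IsCompact C ∧ V ⊆ C ∧ C ⊆ W ∧
      ∀ g : G, ∀ y ∈ V, g • y ∈ V ↔ g ∈ stabilizer G x := by
  obtain ⟨I, hI, hIx⟩ :=
    isOpen_inter_eq_singleton_of_mem_discrete (isDiscrete_orbit G x) (mem_orbit_self x)
  have hxI : x ∈ I := (hIx.ge rfl).1
  obtain ⟨K, hK, hKW, hKc⟩ := local_compact_nhds (Filter.inter_mem hW (hI.mem_nhds hxI))
  have hxK : x ∈ interior K := mem_interior_iff_mem_nhds.2 hK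
  have hKx {g : G} (hg : g • x ∈ K) : g • x = x := hIx.le ⟨(hKW hg).2, mem_orbit x g⟩
  set A : Set X := {a | ∀ g : G, g • a ∉ frontier K} ∩ interior K
  have hA : IsOpen A := (isOpen_setOf_forall_smul_notMem
    (hKc.of_isClosed_subset isClosed_frontier hKc.isClosed.frontier_subset)).inter isOpen_interior
  have hxA : x ∈ A := ⟨fun g hg => hg.2 <| by
    rwa [hKx (hKc.isClosed.frontier_subset hg)], hxK⟩
  set V := connectedComponentIn A x
  have hVA : V ⊆ A := connectedComponentIn_subset A x
  have hxV : x ∈ V := mem_connectedComponentIn hxA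
  have hV : IsPreconnected V := isPreconnected_connectedComponentIn
  have hgV (g : G) : IsPreconnected (g • V) := hV.image _ (continuous_const_smul g).continuousOn
  have hgK (g : G) (hne : (g • V ∩ K).Nonempty) : g • V ⊆ interior K := by
    refine subset_interior_of_disjoint_frontier (hgV g) (disjoint_left.2 ?_) hne
    rintro _ ⟨y, hy, rfl⟩
    exact (hVA hy).1 g
  refine ⟨V, K, hA.connectedComponentIn, hV, hxV, hKc, fun y hy => interior_subset (hVA hy).2,
    fun y hy => (hKW hy).1, fun g y hy => ⟨fun hgy => ?_, fun hg => ?_⟩⟩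
  · have hmeet : (g • V ∩ K).Nonempty :=
      ⟨g • y, smul_mem_smul_set hy, interior_subset (hVA hgy).2⟩
    exact hKx (interior_subset (hgK g hmeet (smul_mem_smul_set hxV)))
  · have hxgV : x ∈ g • V := ⟨x, hxV, hg⟩
    refine (hgV g).subset_connectedComponentIn hxgV ?_ (smul_mem_smul_set hy)
    refine subset_inter ?_ (hgK g ⟨x, hxgV, interior_subset hxK⟩)
    rintro _ ⟨v, hv, rfl⟩ k
    rw [smul_smul]
    exact (hVA hv).1 (k * g)

end T2Quotient
end OrbitSpace

section PeriodicPiecewise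

open Function Set

variable {X : Type*} [TopologicalSpace X] {h : X → X} {N U : Set X} {k : ℕ}

lemma eqOn_iterate {α : Type*} {f g : α → α} {s : Set α} (hfg : EqOn f g s) (hg : MapsTo g s s)
    (k : ℕ) : EqOn f^[k] g^[k] s := by
  intro x hx
  induction k with
  | zero => rfl
  | succ k ih => rw [iterate_succ_apply', iterate_succ_apply', ih, hfg (hg.iterate k hx)]

open Classical in
lemma PeriodicOn.piecewise_id (hN : IsOpen N) (hUN : U ⊆ N) (hm : MapsTo h U U)
    (hc : ContinuousOn h N) (hk : 0 < k) (hper : ∀ x ∈ U, IsPeriodicPt h k x)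
    (hfr : N ∩ frontier U ⊆ fixedPoints h) : PeriodicOn (U.piecewise h id) N k where
  isOpen := hN
  mapsTo x hx := by
    by_cases hxU : x ∈ U
    · rw [piecewise_eq_of_mem _ _ _ hxU]
      exact hUN (hm hxU)
    · rwa [piecewise_eq_of_notMem _ _ _ hxU]
  continuousOn :=
    ContinuousOn.piecewise hfr (hc.mono inter_subset_left) continuousOn_id
  pos := hk
  isPeriodicPt x _ := by
    by_cases hxU : x ∈ U
    · exact (eqOn_iterate (piecewise_eqOn U h id) hm k hxU).trans (hper x hxU)
    · have hfix : IsFixedPt (U.piecewise h id) x := piecewise_eq_of_notMem U h id hxU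
      exact hfix.iterate k

lemma NewmanProperty.subset_closure_or_subset_fixedPoints (hX : NewmanProperty X) (hN : IsOpen N)
    (hNc : IsPreconnected N) (hUN : U ⊆ N) (hm : MapsTo h U U) (hc : ContinuousOn h N) (hk : 0 < k)
    (hper : ∀ x ∈ U, IsPeriodicPt h k x) (hfr : N ∩ frontier U ⊆ fixedPoints h) :
    N ⊆ closure U ∨ U ⊆ fixedPoints h := by
  classical
  refine or_iff_not_imp_left.2 fun hNU x hx => ?_
  obtain ⟨y, hy, hyU⟩ := not_subset.1 hNU
  have hout : (closure U)ᶜ ⊆ fixedPoints (U.piecewise h id) := fun z hz =>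
    piecewise_eq_of_notMem _ _ _ fun hzU => hz (subset_closure hzU)
  have hfix := hX.subset_fixedPoints (.piecewise_id hN hUN hm hc hk hper hfr) hNc
    ⟨y, hy, interior_maximal hout isClosed_closure.isOpen_compl hyU⟩ (hUN hx)
  rwa [mem_fixedPoints, IsFixedPt, piecewise_eq_of_mem _ _ _ hx] at hfix

end PeriodicPiecewise

section LocallyPeriodic

open Function Set Topology MulAction

lemma fixedBy_subset_fixedBy_pow {G X : Type*} [Group G] [MulAction G X] (g : G) (m : ℕ) :
    fixedBy X g ⊆ fixedBy X (g ^ m) := by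
  simpa only [zpow_natCast] using fixedBy_subset_fixedBy_zpow X g m

variable {G X : Type*} [Group G] [TopologicalSpace X] [MulAction G X]

/-- The points with a neighbourhood on which some positive power of `g` acts as the identity. -/
def locallyPeriodicPts (X : Type*) [TopologicalSpace X] [MulAction G X] (g : G) : Set X :=
  ⋃ m : ℕ, ⋃ _ : 0 < m, interior (fixedBy X (g ^ m))

lemma mem_locallyPeriodicPts {g : G} {x : X} :
    x ∈ locallyPeriodicPts X g ↔ ∃ m : ℕ, 0 < m ∧ x ∈ interior (fixedBy X (g ^ m)) := by
  simp only [locallyPeriodicPts, mem_iUnion, exists_prop]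

lemma isOpen_locallyPeriodicPts (g : G) : IsOpen (locallyPeriodicPts X g) :=
  isOpen_iUnion fun _ => isOpen_iUnion fun _ => isOpen_interior

lemma locallyPeriodicPts_pow (g : G) {k : ℕ} (hk : 0 < k) :
    locallyPeriodicPts X (g ^ k) = locallyPeriodicPts X g := by
  ext x
  simp only [mem_locallyPeriodicPts, ← pow_mul]
  refine ⟨fun ⟨m, hm, hx⟩ => ⟨k * m, Nat.mul_pos hk hm, hx⟩, fun ⟨m, hm, hx⟩ => ⟨m, hm, ?_⟩⟩
  rw [mul_comm, pow_mul]
  exact interior_mono (fixedBy_subset_fixedBy_pow _ k) hx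

variable [ContinuousConstSMul G X]

lemma smul_mem_interior_fixedBy_pow {g : G} {m : ℕ} {x : X}
    (hx : x ∈ interior (fixedBy X (g ^ m))) : g • x ∈ interior (fixedBy X (g ^ m)) := by
  have hg : g • fixedBy X (g ^ m) = fixedBy X (g ^ m) := by
    rw [smul_fixedBy, ((Commute.refl g).pow_right m).eq, mul_inv_cancel_right]
  rw [← hg, interior_smul]
  exact smul_mem_smul_set hx

variable [T2Space X]

lemma isClosed_fixedBy (g : G) : IsClosed (fixedBy X g) :=
  isClosed_eq (continuous_const_smul g) continuous_id

lemma mem_interior_fixedBy_of_mem_closure (hX : NewmanProperty X) {g : G} {x : X}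
    (hx : x ∈ locallyPeriodicPts X g) (hxcl : x ∈ closure (interior (fixedBy X g))) :
    x ∈ interior (fixedBy X g) := by
  obtain ⟨k, hk, hxk⟩ := mem_locallyPeriodicPts.1 hx
  refine hX.mem_interior_fixedPoints (continuous_const_smul g) hk ?_ hxcl
  rwa [smul_iterate]

lemma subset_locallyPeriodicPts_of_diff_subset_fixedBy (hX : NewmanProperty X) {g : G}
    {N : Set X} (hN : IsOpen N) (hNc : IsPreconnected N) (hm : MapsTo (g • ·) N N)
    (hfix : N \ locallyPeriodicPts X g ⊆ fixedBy X g) : N ⊆ locallyPeriodicPts X g := by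
  set U : ℕ → Set X := fun m => N ∩ interior (fixedBy X (g ^ m))
  have hU {m : ℕ} (hm0 : 0 < m) : N ⊆ closure (U m) ∨ U m ⊆ fixedBy X g := by
    refine hX.subset_closure_or_subset_fixedPoints (h := (g • ·)) hN hNc inter_subset_left
      (fun x hx => ⟨hm hx.1, smul_mem_interior_fixedBy_pow hx.2⟩)
      (continuous_const_smul g).continuousOn hm0
      (fun x hx => isPeriodicPt_smul_iff.2 (interior_subset hx.2 : _ ∈ fixedBy X _))
      fun x ⟨hxN, hxU⟩ => ?_
    refine hfix ⟨hxN, fun hx => ?_⟩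
    rw [(hN.inter isOpen_interior).frontier_eq] at hxU
    refine hxU.2 ⟨hxN, mem_interior_fixedBy_of_mem_closure hX ?_
      (closure_mono inter_subset_right hxU.1)⟩
    rwa [locallyPeriodicPts_pow g hm0]
  by_cases hall : ∀ m, 0 < m → U m ⊆ fixedBy X g
  · have hNfix : N ⊆ fixedBy X g := fun x hx => by
      by_cases hxg : x ∈ locallyPeriodicPts X g
      · obtain ⟨m, hm0, hxm⟩ := mem_locallyPeriodicPts.1 hxg
        exact hall m hm0 ⟨hx, hxm⟩
      · exact hfix ⟨hx, hxg⟩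
    exact fun x hx => mem_locallyPeriodicPts.2
      ⟨1, one_pos, interior_maximal (by rwa [pow_one]) hN hx⟩
  · push Not at hall
    obtain ⟨m, hm0, hUm⟩ := hall
    have hNm : N ⊆ fixedBy X (g ^ m) := ((hU hm0).resolve_right hUm).trans <|
      closure_minimal (inter_subset_right.trans interior_subset) (isClosed_fixedBy _)
    exact fun x hx => mem_locallyPeriodicPts.2 ⟨m, hm0, interior_maximal hNm hN hx⟩

end LocallyPeriodic

section HausdorffQuotient

open Function Set Topology MulAction

variable {G X : Type*} [Group G] [TopologicalSpace X] [MulAction G X] [ContinuousConstSMul G X]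
  [T2Space (Quotient (orbitRel G X))]

lemma exists_nhds_finite_setOf_smul_mem
    (hX : ∀ x : X, ∃ V ∈ 𝓝 x, {g : G | ∃ u ∈ V, g • u ∈ V}.Finite) (p : X × X) :
    ∃ O ∈ 𝓝 p, {g : G | ∃ u : X, (u, g • u) ∈ O}.Finite := by
  obtain ⟨a, b⟩ := p
  by_cases hb : b ∈ orbit G a
  · obtain ⟨k, rfl⟩ := hb
    obtain ⟨V, hV, hfin⟩ := hX a
    refine ⟨V ×ˢ (k • V), prod_mem_nhds hV (smul_mem_nhds_smul k hV), ?_⟩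
    refine (hfin.image (k * ·)).subset fun g ⟨u, hu, hgu⟩ => ⟨k⁻¹ * g, ⟨u, hu, ?_⟩, ?_⟩
    · rwa [mul_smul, ← mem_smul_set_iff_inv_smul_mem]
    · exact mul_inv_cancel_left k g
  · have hπ : Continuous (Quotient.mk (orbitRel G X)) := continuous_quotient_mk'
    have hrel : IsClosed {q : X × X | Quotient.mk (orbitRel G X) q.2 = Quotient.mk _ q.1} :=
      isClosed_eq (hπ.comp continuous_snd) (hπ.comp continuous_fst)
    refine ⟨_, hrel.isOpen_compl.mem_nhds (mt Quotient.exact hb), ?_⟩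
    convert! finite_empty
    exact eq_empty_of_forall_notMem fun g ⟨u, hu⟩ => hu (Quotient.sound (mem_orbit u g))

theorem finite_setOf_smul_inter_nonempty
    (hX : ∀ x : X, ∃ V ∈ 𝓝 x, {g : G | ∃ u ∈ V, g • u ∈ V}.Finite) {A B : Set X}
    (hA : IsCompact A) (hB : IsCompact B) : {g : G | (g • A ∩ B).Nonempty}.Finite := by
  choose O hO hfin using exists_nhds_finite_setOf_smul_mem hX
  obtain ⟨t, -, ht⟩ := (hA.prod hB).elim_nhds_subcover O fun p _ => hO p
  refine (t.finite_toSet.biUnion fun p _ => hfin p).subset ?_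
  rintro g ⟨_, ⟨u, hu, rfl⟩, hgu⟩
  obtain ⟨p, hp, hup⟩ := mem_iUnion₂.1 (ht (mk_mem_prod hu hgu))
  exact mem_iUnion₂.2 ⟨p, hp, u, hup⟩

variable [Countable G] [T2Space X] [LocallyCompactSpace X] [LocallyConnectedSpace X]

lemma exists_isOpen_subset_periodicPts {g : G} {z : X} (hz : z ∈ fixedBy X g) :
    ∃ V : Set X, IsOpen V ∧ z ∈ V ∧ V ⊆ periodicPts (g • ·) := by
  obtain ⟨V, C, hV, -, hzV, hC, hVC, -, hstab⟩ :=
    exists_isOpen_isPreconnected_smul_mem_iff G (Filter.univ_mem (f := 𝓝 z))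
  refine ⟨V, hV, hzV, fun y hy => mem_periodicPts_of_mapsTo (s := orbit G y ∩ V)
    ((finite_orbit_inter y hC).subset (inter_subset_inter_right _ hVC))
    (MulAction.injective g).injOn ?_ ⟨mem_orbit_self y, hy⟩⟩
  exact fun x hx => ⟨mem_orbit_of_mem_orbit g hx.1, (hstab g x hx.2).2 hz⟩

theorem fixedBy_subset_locallyPeriodicPts (hX : NewmanProperty X) (g : G) :
    fixedBy X g ⊆ locallyPeriodicPts X g := by
  intro z hz
  by_contra hbad
  obtain ⟨V, hV, hzV, hperiodic⟩ := exists_isOpen_subset_periodicPts hz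
  obtain ⟨k, U, hU, ⟨w, hw, hwU⟩, hsub⟩ := exists_isOpen_inter_subset_of_subset_iUnion
    (S := V \ locallyPeriodicPts X g) (F := fun k : ℕ => fixedBy X (g ^ (k + 1)))
    (hV.isLocallyClosed.inter (isOpen_locallyPeriodicPts g).isClosed_compl.isLocallyClosed)
    ⟨z, hzV, hbad⟩ (fun k => isClosed_fixedBy _) fun y hy => by
      obtain ⟨k, hk, hyk⟩ := hperiodic hy.1
      exact mem_iUnion.2 ⟨k - 1, by rwa [Nat.sub_add_cancel hk, mem_fixedBy,
        ← isPeriodicPt_smul_iff]⟩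
  obtain ⟨N, K, hN, hNc, hwN, -, hNK, hKUV, hstab⟩ :=
    exists_isOpen_isPreconnected_smul_mem_iff G ((hU.inter hV).mem_nhds ⟨hwU, hw.1⟩)
  have hNUV : N ⊆ U ∩ V := hNK.trans hKUV
  have hNper : N ⊆ locallyPeriodicPts X (g ^ (k + 1)) := by
    refine subset_locallyPeriodicPts_of_diff_subset_fixedBy hX hN hNc
      (fun y hy => (hstab _ y hy).2 (hsub ⟨hw, hwU⟩)) fun y ⟨hy, hyg⟩ => ?_
    rw [locallyPeriodicPts_pow g k.succ_pos] at hyg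
    exact hsub ⟨⟨(hNUV hy).2, hyg⟩, (hNUV hy).1⟩
  rw [locallyPeriodicPts_pow g k.succ_pos] at hNper
  exact hw.2 (hNper hwN)

variable [PreconnectedSpace X] [FaithfulSMul G X]

theorem eq_one_of_interior_fixedBy_nonempty (hX : NewmanProperty X) {g : G}
    (hg : (interior (fixedBy X g)).Nonempty) : g = 1 := by
  have hclosed : IsClosed (interior (fixedBy X g)) := isClosed_of_closure_subset fun z hz =>
    mem_interior_fixedBy_of_mem_closure hX (fixedBy_subset_locallyPeriodicPts hX g
      (closure_minimal interior_subset (isClosed_fixedBy g) hz)) hz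
  have huniv := IsClopen.eq_univ ⟨hclosed, isOpen_interior⟩ hg
  exact fixedBy_eq_univ_iff_eq_one.1 (univ_subset_iff.1 (huniv ▸ interior_subset))

theorem dense_setOf_stabilizer_eq_bot (hX : NewmanProperty X) :
    Dense {y : X | stabilizer G y = ⊥} := by
  have hdense : Dense (⋂ g : {g : G // g ≠ 1}, (fixedBy X (g : G))ᶜ) := by
    refine dense_iInter_of_isOpen (fun g => (isClosed_fixedBy (g : G)).isOpen_compl) fun g => ?_
    rw [← interior_eq_empty_iff_dense_compl, ← not_nonempty_iff_eq_empty]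
    exact mt (eq_one_of_interior_fixedBy_nonempty hX) g.2
  refine hdense.mono fun y hy => (Subgroup.eq_bot_iff_forall _).2 fun g hg => ?_
  by_contra hne
  exact mem_iInter.1 hy ⟨g, hne⟩ hg

theorem finite_stabilizer (hX : NewmanProperty X) (x : X) : Finite (stabilizer G x) := by
  obtain ⟨V, C, hV, -, hxV, hC, hVC, -, hstab⟩ :=
    exists_isOpen_isPreconnected_smul_mem_iff G (Filter.univ_mem (f := 𝓝 x))
  obtain ⟨y, hyV, hy⟩ := (dense_setOf_stabilizer_eq_bot hX (G := G)).inter_open_nonempty V hV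
    ⟨x, hxV⟩
  have hmaps : MapsTo (· • y) (stabilizer G x : Set G) (orbit G y ∩ C) := fun g hg =>
    ⟨mem_orbit y g, hVC ((hstab g y hyV).2 hg)⟩
  have hinj : InjOn (· • y) (stabilizer G x : Set G) := fun g _ k _ hgk => by
    have hmem : k⁻¹ * g ∈ stabilizer G y := by
      rw [mem_stabilizer_iff, mul_smul, inv_smul_eq_iff]
      exact hgk
    rw [hy, Subgroup.mem_bot] at hmem
    exact (inv_mul_eq_one.1 hmem).symm
  exact (Finite.of_injOn hmaps hinj (finite_orbit_inter y hC)).to_subtype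

end HausdorffQuotient

end Newman

open MulAction Newman in
theorem stmt15_general {G M : Type*} [Group G] [Countable G] [TopologicalSpace M]
    [PreconnectedSpace M] [T2Space M] [LocallyCompactSpace M] [LocallyConnectedSpace M]
    [MulAction G M] [FaithfulSMul G M] [ContinuousConstSMul G M]
    [T2Space (Quotient (orbitRel G M))] (hM : NewmanProperty M) :
    (∀ A B : Set M, IsCompact A → IsCompact B → {g : G | (g • A ∩ B).Nonempty}.Finite) ∧
      ∀ x : M, Finite (stabilizer G x) := by
  have hfin : ∀ x : M, Finite (stabilizer G x) := finite_stabilizer hM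
  refine ⟨fun A B => finite_setOf_smul_inter_nonempty fun x => ?_, hfin⟩
  obtain ⟨V, -, hV, -, hxV, -, -, -, hstab⟩ :=
    exists_isOpen_isPreconnected_smul_mem_iff G (Filter.univ_mem (f := nhds x))
  refine ⟨V, hV.mem_nhds hxV, (Set.toFinite (stabilizer G x : Set G)).subset ?_⟩
  exact fun g ⟨u, hu, hgu⟩ => (hstab g u hu).1 hgu

/-- A countable group acting effectively on a connected topological `n`-manifold with
Hausdorff orbit space acts perfectly: for all compact `A, B` the set
`{g : gA ∩ B ≠ ∅}` is finite; in particular all stabilizers are finite. -/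
theorem stmt15 {G M : Type*} (n : ℕ) [Group G] [Countable G]
    [TopologicalSpace M] [ConnectedSpace M] [T2Space M]
    [ChartedSpace (EuclideanSpace ℝ (Fin n)) M]
    [MulAction G M] [FaithfulSMul G M] [ContinuousConstSMul G M]
    [T2Space (Quotient (MulAction.orbitRel G M))] :
    (∀ A B : Set M, IsCompact A → IsCompact B →
      {g : G | (g • A ∩ B).Nonempty}.Finite) ∧
    (∀ x : M, Finite (MulAction.stabilizer G x)) := by
  have := ChartedSpace.locallyCompactSpace (EuclideanSpace ℝ (Fin n)) M
  have := ChartedSpace.locallyConnectedSpace (EuclideanSpace ℝ (Fin n)) M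
  exact stmt15_general (Newman.newmanProperty_euclideanSpace n).of_chartedSpace
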